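/- Let G be a finite minimal nonsupersoluble group with |π(G)| = 3, and let p₁ > p₂ > p₃ be the distinct prime divisors of |G| with Sylow p_i-subgroups G_{p_i}. Then: (1) G is Ore dispersive and G_{p₂}, G_{p₃} are cyclic; (2) G has precisely three conjugacy classes of maximal subgroups; (3) G_{p₁}/Φ(G_{p₁}), G_{p₁}G_{p₂}/G_{p₁}Φ(G_{p₂}) and G_{p₁}G_{p₂}G_{p₃}/G_{p₁}G_{p₂}Φ(G_{p₃}) are chief factors of G. -/

import Mathlib

open Subgroup

/-- A finite group is supersoluble if it has a normal series, all of whose terms are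
normal in the whole group, with cyclic factors. -/
def IsSupersoluble (G : Type*) [Group G] : Prop :=
  ∃ (n : ℕ) (c : Fin (n + 1) → Subgroup G) (hc : ∀ i, (c i).Normal),
    c 0 = ⊥ ∧ c (Fin.last n) = ⊤ ∧
    ∀ i : Fin n, c i.castSucc ≤ c i.succ ∧
      haveI := (hc i.castSucc).subgroupOf (c i.succ)
      IsCyclic (↥(c i.succ) ⧸ ((c i.castSucc).subgroupOf (c i.succ)))

/-- `H` is a maximal subgroup of `K`, where `H ≤ K` are subgroups of a common group. -/
def IsMaximalIn {G : Type*} [Group G] (H K : Subgroup G) : Prop :=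
  H ≤ K ∧ IsCoatom (H.subgroupOf K)

/-- The `n`-maximal subgroups of `G`: `0`-maximal is `G` itself, and an `(n+1)`-maximal
subgroup is a maximal subgroup of some `n`-maximal subgroup. -/
def IsNMaximal {G : Type*} [Group G] : ℕ → Subgroup G → Prop
  | 0, H => H = ⊤
  | n + 1, H => ∃ K : Subgroup G, IsNMaximal n K ∧ IsMaximalIn H K

/-- `H` is `K`-`𝔘`-subnormal in `K`: there is a chain of subgroups
`H = H₀ ≤ H₁ ≤ ⋯ ≤ Hₜ = K` such that at each step either `H_{i-1}` is normal in `H_i`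
or `H_i` modulo the core of `H_{i-1}` in `H_i` is supersoluble. -/
def IsKUSubnormalIn {G : Type*} [Group G] (H K : Subgroup G) : Prop :=
  ∃ (n : ℕ) (c : Fin (n + 1) → Subgroup G),
    c 0 = H ∧ c (Fin.last n) = K ∧
    ∀ i : Fin n, c i.castSucc ≤ c i.succ ∧
      (((c i.castSucc).subgroupOf (c i.succ)).Normal ∨
        IsSupersoluble (↥(c i.succ) ⧸ ((c i.castSucc).subgroupOf (c i.succ)).normalCore))

/-- `H` is `K`-`𝔘`-subnormal in `G`. -/
def IsKUSubnormal {G : Type*} [Group G] (H : Subgroup G) : Prop :=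
  IsKUSubnormalIn H ⊤

/-- `H` is `𝔘`-subnormal in `G`: there is a chain of subgroups
`H = H₀ ≤ H₁ ≤ ⋯ ≤ Hₙ = G` with `H_i` modulo the core of `H_{i-1}` in `H_i`
supersoluble at each step. -/
def IsUSubnormal {G : Type*} [Group G] (H : Subgroup G) : Prop :=
  ∃ (n : ℕ) (c : Fin (n + 1) → Subgroup G),
    c 0 = H ∧ c (Fin.last n) = ⊤ ∧
    ∀ i : Fin n, c i.castSucc ≤ c i.succ ∧
      IsSupersoluble (↥(c i.succ) ⧸ ((c i.castSucc).subgroupOf (c i.succ)).normalCore)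

/-- The supersoluble residual `G^𝔘` of `G`: the intersection of all normal subgroups `N`
of `G` with `G/N` supersoluble. -/
def ssResidual (G : Type*) [Group G] : Subgroup G :=
  ⨅ N ∈ {N : Subgroup G | ∃ hN : N.Normal, haveI := hN; IsSupersoluble (G ⧸ N)}, N

/-- `N` is a minimal normal subgroup of `G`. -/
def IsMinimalNormal {G : Type*} [Group G] (N : Subgroup G) : Prop :=
  N.Normal ∧ N ≠ ⊥ ∧ ∀ M : Subgroup G, M.Normal → M ≤ N → M ≠ ⊥ → M = N

/-- `G` is minimal nonsupersoluble: not supersoluble, but all proper subgroups are. -/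
def IsMinimalNonsupersoluble (G : Type*) [Group G] : Prop :=
  ¬ IsSupersoluble G ∧ ∀ H : Subgroup G, H ≠ ⊤ → IsSupersoluble H

/-- `G` is an `SDH`-group: minimal nonsupersoluble with `G^𝔘` a minimal normal subgroup. -/
def IsSDH (G : Type*) [Group G] : Prop :=
  IsMinimalNonsupersoluble G ∧ IsMinimalNormal (ssResidual G)

/-- `H` is a Sylow `p`-subgroup of its ambient (finite) group. -/
def IsSylowSubgroup {G : Type*} [Group G] (p : ℕ) (H : Subgroup G) : Prop :=
  IsPGroup p H ∧ ¬ p ∣ H.index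

/-- A finite group is Ore dispersive if, enumerating the prime divisors of `|G|`
in decreasing order as `p₁ > p₂ > ⋯ > pₙ`, for every `i` it has a normal subgroup of
order `p₁^{a₁} ⋯ p_i^{a_i}`. -/
def OreDispersive (G : Type*) [Group G] : Prop :=
  ∀ p : ℕ, p.Prime → ∃ N : Subgroup G, N.Normal ∧
    Nat.card N =
      ∏ q ∈ (Nat.card G).primeFactors.filter (fun q => p ≤ q),
        q ^ (Nat.card G).factorization q

/-- `A/B` is a chief factor of `G`. -/
def IsChiefFactor {G : Type*} [Group G] (A B : Subgroup G) : Prop :=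
  A.Normal ∧ B ≤ A ∧ ∃ hB : B.Normal,
    haveI := hB
    IsMinimalNormal (A.map (QuotientGroup.mk' B))

/-- The subgroups `H` and `K` of `G` are conjugate in `G`. -/
def ConjSubgroup {G : Type*} [Group G] (H K : Subgroup G) : Prop :=
  ∃ g : G, K = H.map (MulAut.conj g).toMonoidHom

/-- The Frattini subgroup of a subgroup `H` of `G`, as a subgroup of `G`. -/
def frattiniIn {G : Type*} [Group G] (H : Subgroup G) : Subgroup G :=
  (frattini H).map H.subtype

/-- `G = P ⋊ (Q ⋊ R)` as an internal statement about subgroups `P`, `Q`, `R` of `G`. -/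
def IsInternalSemidirect3 {G : Type*} [Group G] (P Q R : Subgroup G) : Prop :=
  P.Normal ∧ P ⊓ (Q ⊔ R) = ⊥ ∧ P ⊔ Q ⊔ R = ⊤ ∧
    (Q.subgroupOf (Q ⊔ R)).Normal ∧ Q ⊓ R = ⊥

/-- `G = P ⋊ (Q ⋊ (R ⋊ T))` as an internal statement about subgroups of `G`. -/
def IsInternalSemidirect4 {G : Type*} [Group G] (P Q R T : Subgroup G) : Prop :=
  P.Normal ∧ P ⊓ (Q ⊔ R ⊔ T) = ⊥ ∧ P ⊔ Q ⊔ R ⊔ T = ⊤ ∧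
    (Q.subgroupOf (Q ⊔ R ⊔ T)).Normal ∧ Q ⊓ (R ⊔ T) = ⊥ ∧
    (R.subgroupOf (R ⊔ T)).Normal ∧ R ⊓ T = ⊥

/-!
Let `p` be the smallest prime divisor of `|G|` and `D` a `p`-subgroup. A `q`-subgroup `X` of
`N_G(D)` with `q ≠ p` generates with `D` a `{p, q}`-group, hence a proper and so supersoluble
subgroup, in which `X` is normal like `D`; thus `X` centralizes `D`. By the argument of Alperin and
Frobenius, `G` then has a proper normal subgroup of `p`-power index. It is supersoluble, and its
Sylow tower gives one of `G`.

If `P₁/Φ(P₁)` had a proper nontrivial `G`-invariant subgroup, Maschke's theorem would write `P₁` as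
a product of two proper normal subgroups of `G`. Each of them lies in a supersoluble supplement of
`P₁`, which makes it hypercyclically embedded in `G`; then so is `P₁`, and `G` is supersoluble.

Let `C` be the centralizer of `P₁/Φ(P₁)`. Every proper `M ≥ P₁` is supersoluble, so `[M, M] ≤ C`,
whereas `[P₂, P₃]` is not contained in `C`: otherwise the eigenspaces of `P₂` on `P₁/Φ(P₁)` would be
`G`-invariant, forcing `P₁` to be cyclic and `G` supersoluble. Hence `P₁P₂` and some single `y ∈ P₃`
already generate `G`, and `P₁P₂/P₁` is not generated by two proper `G`-invariant subgroups. This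
makes `P₃` and `P₂` cyclic, and the remaining two chief factors follow.

A maximal subgroup contains one term of the tower `1 < P₁ < P₁P₂ < G` but not the next. There it
complements an abelian chief factor, and complements of an abelian normal Hall subgroup are
conjugate, so each step of the tower gives one class of maximal subgroups.
-/

section Hypercyclic

variable {G H : Type*} [Group G] [Group H]

/-- `A` is hypercyclically embedded in `G`: some chain of normal subgroups of `G` leads from `⊥`
to `A` with cyclic factors, each term being generated over the previous one by one element. -/
inductive IsHypercyclicallyEmbedded : Subgroup G → Prop
  | bot : IsHypercyclicallyEmbedded ⊥
  | sup_zpowers {X : Subgroup G} (b : G) :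
      IsHypercyclicallyEmbedded X → (X ⊔ zpowers b).Normal →
        IsHypercyclicallyEmbedded (X ⊔ zpowers b)

theorem exists_sup_zpowers_of_isCyclic_map (f : G →* H) (A : Subgroup G) [hA : IsCyclic (A.map f)] :
    ∃ c, A = A ⊓ f.ker ⊔ zpowers c := by
  obtain ⟨_, hg⟩ := (Subgroup.isCyclic_iff_exists_zpowers_eq_top _).1 hA
  obtain ⟨c, hc, rfl⟩ : _ ∈ A.map f := hg ▸ mem_zpowers _
  refine ⟨c, le_antisymm (fun a ha => ?_) (sup_le inf_le_left (by simpa using hc))⟩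
  obtain ⟨k, hk⟩ : f a ∈ zpowers (f c) := hg ▸ mem_map_of_mem f ha
  have hker : (c ^ k)⁻¹ * a ∈ f.ker := by
    rw [MonoidHom.mem_ker, map_mul, map_inv, map_zpow, inv_mul_eq_one]
    exact hk
  rw [← mul_inv_cancel_left (c ^ k) a]
  exact mul_mem (mem_sup_right (zpow_mem (mem_zpowers c) k))
    (mem_sup_left ⟨A.mul_mem (A.inv_mem (A.zpow_mem hc k)) ha, hker⟩)

theorem isCyclic_quotient_subgroupOf_iff {X Y : Subgroup G} [X.Normal] (hXY : X ≤ Y) :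
    IsCyclic (Y ⧸ X.subgroupOf Y) ↔ ∃ b, Y = X ⊔ zpowers b := by
  constructor
  · intro h
    have hcyc : IsCyclic ((⊤ : Subgroup Y).map (QuotientGroup.mk' (X.subgroupOf Y))) :=
      isCyclic_of_injective (Subgroup.subtype _) (Subgroup.subtype_injective _)
    obtain ⟨c, hc⟩ := exists_sup_zpowers_of_isCyclic_map (QuotientGroup.mk' (X.subgroupOf Y)) ⊤
    refine ⟨c, ?_⟩
    simpa [Subgroup.map_sup, ← MonoidHom.range_eq_map, inf_eq_left.2 hXY] using
      congrArg (Subgroup.map Y.subtype) hc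
  · rintro ⟨b, rfl⟩
    rw [isCyclic_iff_exists_zpowers_eq_top]
    have hb : b ∈ X ⊔ zpowers b := mem_sup_right (mem_zpowers b)
    refine ⟨(⟨b, hb⟩ : ↥(X ⊔ zpowers b)), top_le_iff.1 fun y _ => ?_⟩
    obtain ⟨⟨y, hy⟩, rfl⟩ := QuotientGroup.mk_surjective y
    obtain ⟨_, ⟨k, rfl⟩, x, hx, rfl⟩ := mem_sup_of_normal_right.1 (sup_comm X _ ▸ hy)
    refine ⟨k, ?_⟩
    dsimp only
    rw [← QuotientGroup.mk_zpow, QuotientGroup.eq, mem_subgroupOf]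
    simpa using hx

namespace IsHypercyclicallyEmbedded

theorem normal {A : Subgroup G} : IsHypercyclicallyEmbedded A → A.Normal
  | bot => inferInstance
  | sup_zpowers _ _ h => h

theorem of_zpowers {c : G} (hc : (zpowers c).Normal) : IsHypercyclicallyEmbedded (zpowers c) := by
  rw [← bot_sup_eq (zpowers c)] at hc ⊢
  exact sup_zpowers c bot hc

theorem map {f : G →* H} (hf : Function.Surjective f) {A : Subgroup G}
    (hA : IsHypercyclicallyEmbedded A) : IsHypercyclicallyEmbedded (A.map f) := by
  induction hA with
  | bot => simpa using bot
  | sup_zpowers b _ h ih =>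
    have := h.map f hf
    rw [Subgroup.map_sup, MonoidHom.map_zpowers] at this ⊢
    exact sup_zpowers _ ih this

theorem sup {A B : Subgroup G} (hA : IsHypercyclicallyEmbedded A)
    (hB : IsHypercyclicallyEmbedded B) : IsHypercyclicallyEmbedded (A ⊔ B) := by
  have := hA.normal
  induction hB with
  | bot => simpa using hA
  | @sup_zpowers X b _ h ih =>
    have := sup_normal A (X ⊔ zpowers b)
    rw [← sup_assoc] at this ⊢
    exact sup_zpowers b ih this

theorem inf_right {A : Subgroup G} (hA : IsHypercyclicallyEmbedded A) (B : Subgroup G)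
    [B.Normal] : IsHypercyclicallyEmbedded (A ⊓ B) := by
  induction hA with
  | bot => simpa using bot
  | @sup_zpowers X b hX h ih =>
    have := hX.normal
    have : IsCyclic (((X ⊔ zpowers b) ⊓ B).map (QuotientGroup.mk' X)) := by
      refine Subgroup.isCyclic_of_le (H' := zpowers (b : G ⧸ X)) ?_
      refine (map_mono inf_le_left).trans ?_
      simp [Subgroup.map_sup, MonoidHom.map_zpowers]
    obtain ⟨c, hc⟩ := exists_sup_zpowers_of_isCyclic_map (QuotientGroup.mk' X)
      ((X ⊔ zpowers b) ⊓ B)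
    have : ((X ⊔ zpowers b) ⊓ B).Normal := normal_inf_normal _ _
    rw [QuotientGroup.ker_mk', inf_right_comm _ B,
      inf_eq_right.2 (le_sup_left : X ≤ X ⊔ zpowers b)] at hc
    rw [hc] at this ⊢
    exact sup_zpowers c ih this

theorem of_le {A B : Subgroup G} (hA : IsHypercyclicallyEmbedded A) [B.Normal] (h : B ≤ A) :
    IsHypercyclicallyEmbedded B := by
  simpa [inf_eq_right.2 h] using hA.inf_right B

theorem comap_mk {N : Subgroup G} [N.Normal] (hN : IsHypercyclicallyEmbedded N)
    {A : Subgroup (G ⧸ N)} (hA : IsHypercyclicallyEmbedded A) :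
    IsHypercyclicallyEmbedded (A.comap (QuotientGroup.mk' N)) := by
  induction hA with
  | bot => simpa using hN
  | @sup_zpowers X b _ h ih =>
    have := h.comap (QuotientGroup.mk' N)
    obtain ⟨b, rfl⟩ := QuotientGroup.mk'_surjective N b
    have hcomap : (X ⊔ zpowers (QuotientGroup.mk' N b)).comap (QuotientGroup.mk' N) =
        X.comap (QuotientGroup.mk' N) ⊔ zpowers b := by
      rw [← comap_sup_eq _ _ _ (QuotientGroup.mk'_surjective N), ← MonoidHom.map_zpowers,
        QuotientGroup.comap_map_mk', ← sup_assoc, sup_eq_left.2 (QuotientGroup.le_comap_mk' N X)]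
    rw [hcomap] at this ⊢
    exact sup_zpowers b ih this

theorem exists_zpowers_normal {A : Subgroup G} (hA : IsHypercyclicallyEmbedded A) (hne : A ≠ ⊥) :
    ∃ c ∈ A, c ≠ 1 ∧ (zpowers c).Normal := by
  induction hA with
  | bot => exact absurd rfl hne
  | @sup_zpowers X b _ h ih =>
    obtain rfl | hX := eq_or_ne X ⊥
    · rw [bot_sup_eq] at h hne ⊢
      exact ⟨b, mem_zpowers b, mt zpowers_eq_bot.2 hne, h⟩
    · obtain ⟨c, hc, hc'⟩ := ih hX
      exact ⟨c, mem_sup_left hc, hc'⟩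

theorem exists_lt_sup_zpowers {A : Subgroup G} (hA : IsHypercyclicallyEmbedded A) (hne : A ≠ ⊥) :
    ∃ L < A, L.Normal ∧ ∃ c, A = L ⊔ zpowers c := by
  induction hA with
  | bot => exact absurd rfl hne
  | @sup_zpowers X b hX _ ih =>
    obtain hXb | hXb := eq_or_ne X (X ⊔ zpowers b)
    · rw [← hXb] at hne ⊢
      exact ih hne
    · exact ⟨X, lt_of_le_of_ne le_sup_left hXb, hX.normal, b, rfl⟩

theorem exists_fin_chain {A : Subgroup G} (hA : IsHypercyclicallyEmbedded A) :
    ∃ (n : ℕ) (c : Fin (n + 1) → Subgroup G), (∀ i, (c i).Normal) ∧ c 0 = ⊥ ∧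
      c (Fin.last n) = A ∧ ∀ i : Fin n, ∃ b, c i.succ = c i.castSucc ⊔ zpowers b := by
  induction hA with
  | bot => exact ⟨0, fun _ => ⊥, fun _ => inferInstance, rfl, rfl, fun i => i.elim0⟩
  | @sup_zpowers X b _ h ih =>
    obtain ⟨n, c, hc, h₀, rfl, hstep⟩ := ih
    refine ⟨n + 1, Fin.snoc c (c (Fin.last n) ⊔ zpowers b), fun i => ?_, ?_, by simp, fun i => ?_⟩
    · induction i using Fin.lastCases with
      | last => simpa using h
      | cast i => simpa using hc i
    · rw [← Fin.castSucc_zero, Fin.snoc_castSucc, h₀]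
    · induction i using Fin.lastCases with
      | last => exact ⟨b, by rw [Fin.snoc_castSucc, Fin.succ_last, Fin.snoc_last]⟩
      | cast i => simpa only [Fin.snoc_castSucc, ← Fin.castSucc_succ] using hstep i

end IsHypercyclicallyEmbedded

theorem isSupersoluble_iff : IsSupersoluble G ↔ IsHypercyclicallyEmbedded (⊤ : Subgroup G) := by
  constructor
  · rintro ⟨n, c, hc, h₀, hlast, hstep⟩
    have hchain (i : Fin (n + 1)) : IsHypercyclicallyEmbedded (c i) := by
      induction i using Fin.induction with
      | zero => exact h₀ ▸ .bot
      | succ i ih =>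
        have := hc i.castSucc
        obtain ⟨b, hb⟩ := (isCyclic_quotient_subgroupOf_iff (hstep i).1).1 (hstep i).2
        exact hb ▸ ih.sup_zpowers b (hb ▸ hc i.succ)
    exact hlast ▸ hchain _
  · intro h
    obtain ⟨n, c, hc, h₀, hlast, hstep⟩ := h.exists_fin_chain
    have hle (i : Fin n) : c i.castSucc ≤ c i.succ := by
      obtain ⟨b, hb⟩ := hstep i
      exact hb ▸ le_sup_left
    refine ⟨n, c, hc, h₀, hlast, fun i => ⟨hle i, ?_⟩⟩
    have := hc i.castSucc
    exact (isCyclic_quotient_subgroupOf_iff (hle i)).2 (hstep i)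

theorem IsHypercyclicallyEmbedded.isSupersoluble_of_quotient {N : Subgroup G} [N.Normal]
    (hN : IsHypercyclicallyEmbedded N) (h : IsSupersoluble (G ⧸ N)) : IsSupersoluble G :=
  isSupersoluble_iff.2 (by simpa using hN.comap_mk (isSupersoluble_iff.1 h))

namespace IsSupersoluble

theorem isHypercyclicallyEmbedded (h : IsSupersoluble G) (A : Subgroup G) [A.Normal] :
    IsHypercyclicallyEmbedded A :=
  (isSupersoluble_iff.1 h).of_le le_top

theorem of_surjective (h : IsSupersoluble G) {f : G →* H} (hf : Function.Surjective f) :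
    IsSupersoluble H := by
  rw [isSupersoluble_iff, ← Subgroup.map_top_of_surjective f hf]
  exact (isSupersoluble_iff.1 h).map hf

theorem quotient_of_sup_eq_top {N K : Subgroup G} [N.Normal] (hK : IsSupersoluble K)
    (h : N ⊔ K = ⊤) : IsSupersoluble (G ⧸ N) := by
  refine hK.of_surjective (f := (QuotientGroup.mk' N).comp K.subtype) ?_
  rw [← MonoidHom.range_eq_top, MonoidHom.range_comp, range_subtype,
    ← bot_sup_eq (map _ K), ← QuotientGroup.map_mk'_self N, ← Subgroup.map_sup, h,
    Subgroup.map_top_of_surjective _ (QuotientGroup.mk'_surjective N)]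

end IsSupersoluble

end Hypercyclic

section Hall

variable {G : Type*} [Group G]

theorem coprime_natCard_of_isPGroup [Finite G] {p : ℕ} (hp : p.Prime) (hG : IsPGroup p G) {m : ℕ}
    (hm : ¬ p ∣ m) : (Nat.card G).Coprime m := by
  have := Fact.mk hp
  obtain ⟨k, hk⟩ := IsPGroup.iff_card.1 hG
  exact hk ▸ Nat.Coprime.pow_left k ((hp.coprime_iff_not_dvd).2 hm)

theorem eq_of_dvd_natCard_of_isPGroup [Finite G] {p q : ℕ} (hp : p.Prime) (hG : IsPGroup p G)
    (hq : q.Prime) (h : q ∣ Nat.card G) : q = p := by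
  by_contra hqp
  exact hq.one_lt.ne' (Nat.eq_one_of_dvd_coprimes (coprime_natCard_of_isPGroup hp hG
    (mt (Nat.prime_dvd_prime_iff_eq hp hq).1 (Ne.symm hqp))) h dvd_rfl)

theorem le_of_coprime_index {N H : Subgroup G} [N.Normal] (h : (Nat.card H).Coprime N.index) :
    H ≤ N := by
  intro x hx
  rw [← QuotientGroup.eq_one_iff, ← orderOf_eq_one_iff]
  refine Nat.eq_one_of_dvd_coprimes h ?_ (_root_.orderOf_dvd_natCard _)
  exact (orderOf_map_dvd (QuotientGroup.mk' N) x).trans (H.orderOf_dvd_natCard hx)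

theorem characteristic_of_coprime_index {N : Subgroup G} [N.Normal]
    (h : (Nat.card N).Coprime N.index) : N.Characteristic := by
  refine characteristic_iff_map_le.2 fun φ => le_of_coprime_index ?_
  rwa [card_map_of_injective φ.injective]

theorem index_comap_mk {N : Subgroup G} [N.Normal] (K : Subgroup (G ⧸ N)) :
    (K.comap (QuotientGroup.mk' N)).index = K.index :=
  index_comap_of_surjective K (QuotientGroup.mk'_surjective N)

theorem card_comap_mk [Finite G] {N : Subgroup G} [N.Normal] (K : Subgroup (G ⧸ N)) :
    Nat.card (K.comap (QuotientGroup.mk' N)) = Nat.card N * Nat.card K := by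
  refine Nat.eq_of_mul_eq_mul_right (Nat.pos_of_ne_zero K.index_ne_zero_of_finite) ?_
  rw [mul_assoc, K.card_mul_index, ← N.index_eq_card, N.card_mul_index, ← index_comap_mk,
    card_mul_index]

/-- `N` is the normal Hall subgroup of `G` for the set of all primes `p ≥ n`, so that `G` is Ore
dispersive if and only if such a subgroup exists for every `n`. -/
structure IsUpperHall (n : ℕ) (N : Subgroup G) : Prop where
  normal : N.Normal
  le_of_dvd_card : ∀ p : ℕ, p.Prime → p ∣ Nat.card N → n ≤ p
  lt_of_dvd_index : ∀ p : ℕ, p.Prime → p ∣ N.index → p < n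

theorem isUpperHall_top {n : ℕ} (h : ∀ p : ℕ, p.Prime → p ∣ Nat.card G → n ≤ p) :
    IsUpperHall n (⊤ : Subgroup G) where
  normal := inferInstance
  le_of_dvd_card := by rwa [card_top]
  lt_of_dvd_index p hp h := absurd (Nat.dvd_one.1 (index_top (G := G) ▸ h)) hp.ne_one

namespace IsUpperHall

variable {n : ℕ} {N : Subgroup G}

theorem coprime (hN : IsUpperHall n N) : (Nat.card N).Coprime N.index :=
  Nat.coprime_of_dvd fun p hp h h' =>
    (hN.le_of_dvd_card p hp h).not_gt (hN.lt_of_dvd_index p hp h')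

theorem map_subtype {K : Subgroup G} [K.Normal] (hK : ∀ p : ℕ, p.Prime → p ∣ K.index → p < n)
    {L : Subgroup K} (hL : IsUpperHall n L) : IsUpperHall n (L.map K.subtype) where
  normal :=
    have := hL.normal
    have := characteristic_of_coprime_index hL.coprime
    ConjAct.normal_of_characteristic_of_normal
  le_of_dvd_card := card_map_of_injective K.subtype_injective ▸ hL.le_of_dvd_card
  lt_of_dvd_index p hp h := by
    rw [index_map_subtype, hp.dvd_mul] at h
    exact h.elim (hL.lt_of_dvd_index p hp) (hK p hp)

theorem eq_of_le (hN : IsUpperHall n N) {H : Subgroup G} (hHN : H ≤ N)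
    (hH : ∀ p : ℕ, p.Prime → p ∣ H.index → p < n) : H = N := by
  refine le_antisymm hHN (relIndex_eq_one.1 (Nat.eq_one_of_dvd_coprimes
    (Nat.coprime_of_dvd fun p hp h h' => ?_) (index_dvd_card _) (dvd_refl (H.relIndex N))))
  exact (hN.le_of_dvd_card p hp h).not_gt
    (hH p hp (h'.trans (relIndex_mul_index hHN ▸ dvd_mul_right _ _)))

theorem le_of_isPGroup [Finite G] (hN : IsUpperHall n N) {p : ℕ} (hp : p.Prime) (hn : n ≤ p)
    {P : Subgroup G} (hP : IsPGroup p P) : P ≤ N :=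
  have := hN.normal
  le_of_coprime_index (coprime_natCard_of_isPGroup hp hP
    fun h => hn.not_gt (hN.lt_of_dvd_index p hp h))

theorem primeFactors_card [Finite G] (hN : IsUpperHall n N) :
    (Nat.card N).primeFactors = {p ∈ (Nat.card G).primeFactors | n ≤ p} := by
  ext p
  simp only [Finset.mem_filter, Nat.mem_primeFactors_of_ne_zero Nat.card_pos.ne']
  constructor
  · exact fun ⟨hp, h⟩ => ⟨⟨hp, h.trans N.card_subgroup_dvd_card⟩, hN.le_of_dvd_card p hp h⟩
  · rintro ⟨⟨hp, h⟩, hnp⟩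
    rw [← N.card_mul_index, hp.dvd_mul] at h
    exact ⟨hp, h.resolve_right fun h' => hnp.not_gt (hN.lt_of_dvd_index p hp h')⟩

theorem card_eq [Finite G] (hN : IsUpperHall n N) :
    Nat.card N = ∏ p ∈ (Nat.card G).primeFactors with n ≤ p,
      p ^ (Nat.card G).factorization p := by
  rw [← hN.primeFactors_card]
  conv_lhs => rw [← Nat.prod_factorization_pow_eq_self (Nat.card_pos (α := N)).ne']
  refine Finset.prod_congr rfl fun p hp => ?_
  obtain ⟨hp, h, -⟩ := Nat.mem_primeFactors.1 hp
  have hindex : ¬ p ∣ N.index := fun h' =>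
    (hN.le_of_dvd_card p hp h).not_gt (hN.lt_of_dvd_index p hp h')
  rw [← N.card_mul_index, Nat.factorization_mul Nat.card_pos.ne' N.index_ne_zero_of_finite,
    Finsupp.add_apply, Nat.factorization_eq_zero_of_not_dvd hindex, add_zero]

end IsUpperHall

theorem oreDispersive_of_forall_isUpperHall [Finite G]
    (h : ∀ n, ∃ N : Subgroup G, IsUpperHall n N) : OreDispersive G := fun n _ =>
  let ⟨N, hN⟩ := h n
  ⟨N, hN.normal, hN.card_eq⟩

theorem normal_of_le_of_isCyclic {A B : Subgroup G} [hA : A.Normal] [hcyc : IsCyclic A]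
    (h : B ≤ A) : B.Normal := by
  obtain ⟨c, rfl⟩ := (Subgroup.isCyclic_iff_exists_zpowers_eq_top A).1 hcyc
  refine ⟨fun x hx g => ?_⟩
  obtain ⟨k, rfl⟩ := h hx
  obtain ⟨j, hj : c ^ j = g * c * g⁻¹⟩ := hA.conj_mem c (mem_zpowers c) g
  have hconj : g * c ^ k * g⁻¹ = (c ^ k) ^ j := by
    rw [← conj_zpow, ← hj, ← zpow_mul, ← zpow_mul, mul_comm]
  exact hconj ▸ zpow_mem hx j

theorem IsSupersoluble.exists_normal_card_prime [Finite G] [Nontrivial G]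
    (hG : IsSupersoluble G) : ∃ C : Subgroup G, C.Normal ∧ (Nat.card C).Prime := by
  obtain ⟨c, -, hc, hn⟩ := (isSupersoluble_iff.1 hG).exists_zpowers_normal top_ne_bot
  obtain ⟨p, hp, hd⟩ := Nat.exists_prime_and_dvd (mt orderOf_eq_one_iff.1 hc)
  refine ⟨zpowers (c ^ (orderOf c / p)), normal_of_le_of_isCyclic (A := zpowers c) ?_, ?_⟩
  · exact zpowers_le.2 (pow_mem (mem_zpowers c) _)
  · rwa [Nat.card_zpowers, orderOf_pow_orderOf_div (orderOf_pos c).ne' hd]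

theorem mem_centralizer_of_pow_mem {C : Subgroup G} [C.Normal] (hC : (Nat.card C).Prime) {x : G}
    {m : ℕ} (hx : x ^ m ∈ C) (hm : m.Coprime (Nat.card C - 1)) : x ∈ centralizer (C : Set G) := by
  have := Fact.mk hC
  have hcyc : IsCyclic C := isCyclic_of_prime_card rfl
  have := Nat.finite_of_card_ne_zero hC.ne_zero
  have hpow : (MulAut.conjNormal x : MulAut C) ^ m = 1 := by
    ext y
    rw [← map_pow, MulAut.conjNormal_apply, MulAut.one_apply, mul_inv_eq_iff_eq_mul]
    exact congrArg Subtype.val (IsCyclic.commGroup.mul_comm (⟨x ^ m, hx⟩ : C) y)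
  have htot : (MulAut.conjNormal x : MulAut C) ^ (Nat.card C - 1) = 1 := by
    rw [← Nat.totient_prime hC, ← IsCyclic.card_mulAut, pow_card_eq_one']
  have hone : (MulAut.conjNormal x : MulAut C) = 1 :=
    orderOf_eq_one_iff.1 (Nat.eq_one_of_dvd_coprimes hm (orderOf_dvd_of_pow_eq_one hpow)
      (orderOf_dvd_of_pow_eq_one htot))
  refine mem_centralizer_iff.2 fun y hy => ?_
  have hxy : x * y * x⁻¹ = y := congrArg (fun φ : MulAut C => (φ ⟨y, hy⟩ : G)) hone
  exact (mul_inv_eq_iff_eq_mul.1 hxy).symm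

theorem exists_normal_isComplement'_of_le_center {C : Subgroup G} [C.Normal] (hC : C ≤ center G)
    (h : (Nat.card C).Coprime C.index) : ∃ L : Subgroup G, L.Normal ∧ IsComplement' C L := by
  obtain ⟨L, hL⟩ := exists_right_complement'_of_coprime h
  refine ⟨L, normalizer_eq_top_iff.1 (top_le_iff.1 ?_), hL⟩
  rw [← hL.sup_eq_top]
  exact sup_le (hC.trans (center_le_normalizer _)) le_normalizer

theorem IsUpperHall.comap_mk [Finite G] {n : ℕ} {C : Subgroup G} [C.Normal]
    (hC : ∀ p : ℕ, p.Prime → p ∣ Nat.card C → n ≤ p) {K : Subgroup (G ⧸ C)}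
    (hK : IsUpperHall n K) : IsUpperHall n (K.comap (QuotientGroup.mk' C)) where
  normal := hK.normal.comap _
  le_of_dvd_card p hp h := by
    rw [card_comap_mk, hp.dvd_mul] at h
    exact h.elim (hC p hp) (hK.le_of_dvd_card p hp)
  lt_of_dvd_index p hp h := hK.lt_of_dvd_index p hp (index_comap_mk K ▸ h)

theorem comap_mk_le_centralizer {C : Subgroup G} [C.Normal] (hC : (Nat.card C).Prime)
    {K : Subgroup (G ⧸ C)} (hK : (Nat.card K).Coprime (Nat.card C - 1)) :
    K.comap (QuotientGroup.mk' C) ≤ centralizer (C : Set G) := by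
  intro x hx
  refine mem_centralizer_of_pow_mem hC ((QuotientGroup.eq_one_iff _).1 ?_) hK
  exact orderOf_dvd_iff_pow_eq_one.1 (K.orderOf_dvd_natCard hx)

theorem exists_isUpperHall_of_quotient [Finite G] {n : ℕ} {C : Subgroup G} [C.Normal]
    (hC : (Nat.card C).Prime) {K : Subgroup (G ⧸ C)} (hK : IsUpperHall n K) :
    ∃ N : Subgroup G, IsUpperHall n N := by
  obtain hn | hn := le_or_gt n (Nat.card C)
  · exact ⟨_, hK.comap_mk fun p hp h => ((Nat.prime_dvd_prime_iff_eq hp hC).1 h).symm ▸ hn⟩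
  have := hK.normal
  set N := K.comap (QuotientGroup.mk' C)
  have hCN : C ≤ N := QuotientGroup.le_comap_mk' C K
  have hcard : Nat.card (C.subgroupOf N) = Nat.card C :=
    Nat.card_congr (subgroupOfEquivOfLe hCN).toEquiv
  have hindex : (C.subgroupOf N).index = Nat.card K := by
    refine Nat.eq_of_mul_eq_mul_left hC.pos ?_
    rw [← card_comap_mk, ← card_mul_index (C.subgroupOf N), hcard]
  have hCZ : C.subgroupOf N ≤ center N := by
    have hNC : N ≤ centralizer (C : Set G) := by
      refine comap_mk_le_centralizer hC (Nat.coprime_of_dvd fun p hp h h' => ?_)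
      exact (hK.le_of_dvd_card p hp h).not_gt
        ((Nat.le_of_dvd (Nat.sub_pos_of_lt hC.one_lt) h').trans_lt (by lia))
    exact fun c hc => mem_center_iff.2 fun x =>
      Subtype.ext (mem_centralizer_iff.1 (hNC x.2) c hc).symm
  obtain ⟨L, hLn, hL⟩ := exists_normal_isComplement'_of_le_center hCZ <| by
    rw [hcard, hindex]
    exact hC.coprime_iff_not_dvd.2 fun h => (hK.le_of_dvd_card _ hC h).not_gt hn
  refine ⟨L.map N.subtype, IsUpperHall.map_subtype
    (fun p hp h => hK.lt_of_dvd_index p hp (index_comap_mk K ▸ h)) ⟨hLn, ?_, ?_⟩⟩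
  · rw [← hL.symm.index_eq_card, hindex]
    exact hK.le_of_dvd_card
  · rw [hL.index_eq_card, hcard]
    exact fun p _ h => (Nat.le_of_dvd hC.pos h).trans_lt hn

theorem IsSupersoluble.exists_isUpperHall [Finite G] (hG : IsSupersoluble G) (n : ℕ) :
    ∃ N : Subgroup G, IsUpperHall n N := by
  induction h : Nat.card G using Nat.strong_induction_on generalizing G with
  | _ k ih =>
    obtain hs | hs := subsingleton_or_nontrivial G
    · exact ⟨⊤, isUpperHall_top fun p hp h => absurd (by simpa using h) hp.ne_one⟩
    obtain ⟨C, hCn, hC⟩ := hG.exists_normal_card_prime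
    have hlt : Nat.card (G ⧸ C) < k := by
      rw [← h, ← C.index_eq_card, ← C.card_mul_index]
      exact lt_mul_of_one_lt_left (Nat.pos_of_ne_zero C.index_ne_zero_of_finite) hC.one_lt
    obtain ⟨K, hK⟩ := ih _ hlt (hG.of_surjective (QuotientGroup.mk'_surjective C)) rfl
    exact exists_isUpperHall_of_quotient hC hK

end Hall

section PAutomizers

open scoped commutatorElement

variable {G : Type*} [Group G]

/-- The condition that `N_G(D) / C_G(D)` is a `p`-group for every `p`-subgroup `D` of `G`, stated
in terms of the `q`-subgroups of `N_G(D)` with `q ≠ p`. By a theorem of Frobenius it makes `G`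
`p`-nilpotent. -/
def HasPGroupAutomizers (p : ℕ) (G : Type*) [Group G] : Prop :=
  ∀ D : Subgroup G, IsPGroup p D → ∀ q : ℕ, q.Prime → q ≠ p → ∀ X : Subgroup G, IsPGroup q X →
    X ≤ normalizer (D : Set G) → X ≤ centralizer (D : Set G)

theorem eq_top_of_forall_sylow_le [Finite G] {H : Subgroup G}
    (h : ∀ q : ℕ, q.Prime → ∃ Q : Sylow q G, Q ≤ H) : H = ⊤ := by
  by_contra hH
  obtain ⟨q, hq, hd⟩ := Nat.exists_prime_and_dvd (mt index_eq_one.1 hH)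
  have := Fact.mk hq
  obtain ⟨Q, hQ⟩ := h q hq
  exact Q.not_dvd_index (hd.trans (index_dvd_of_le hQ))

theorem lt_inf_normalizer_of_isPGroup [Finite G] {p : ℕ} [Fact p.Prime] {D P : Subgroup G}
    (hP : IsPGroup p P) (h : D < P) : D < P ⊓ normalizer (D : Set G) := by
  have := hP.isNilpotent
  have hD := Group.normalizerCondition_of_isNilpotent (G := P) (D.subgroupOf P)
    (lt_top_iff_ne_top.2 (mt subgroupOf_eq_top.1 h.not_ge))
  rw [← subgroupOf_normalizer_eq h.le, ← map_subtype_lt_map_subtype, subgroupOf_map_subtype,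
    subgroupOf_map_subtype, inf_eq_left.2 h.le, inf_comm] at hD
  exact hD

theorem exists_sylow_inf_le_and_comap_eq {p : ℕ} (P : Sylow p G) (N : Subgroup G) :
    ∃ (R : Sylow p G) (S : Sylow p N), (P : Subgroup G) ⊓ N ≤ R ∧ R.comap N.subtype = S := by
  obtain ⟨S, hS⟩ := (P.isPGroup'.comap_subtype (K := N)).exists_le_sylow
  obtain ⟨R, hR⟩ := S.exists_comap_subtype_eq
  refine ⟨R, S, ?_, hR⟩
  rw [← subgroupOf_map_subtype, map_le_iff_le_comap]
  exact hS.trans hR.ge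

theorem mem_sylow_smul_iff {p : ℕ} {P : Sylow p G} {g x : G} : x ∈ g • P ↔ g⁻¹ * x * g ∈ P := by
  rw [← SetLike.mem_coe, Sylow.coe_smul, Set.mem_smul_set_iff_inv_smul_mem]
  simp

namespace HasPGroupAutomizers

variable [Finite G] {p : ℕ} [Fact p.Prime] (hG : HasPGroupAutomizers p G)

include hG

theorem centralizer_sup_sylow_eq_top {D : Subgroup G} (hD : IsPGroup p D)
    (S : Sylow p (normalizer (D : Set G))) :
    (centralizer (D : Set G)).subgroupOf (normalizer (D : Set G)) ⊔ S = ⊤ := by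
  refine eq_top_of_forall_sylow_le fun q hq => ?_
  obtain rfl | hqp := eq_or_ne q p
  · exact ⟨S, le_sup_right⟩
  · obtain ⟨Q⟩ : Nonempty (Sylow q (normalizer (D : Set G))) := inferInstance
    refine ⟨Q, le_trans (map_le_iff_le_comap.1 ?_) le_sup_left⟩
    exact hG D hD q hq hqp _ (Q.isPGroup'.map _) (map_subtype_le _)

theorem exists_mem_centralizer_smul_eq {D : Subgroup G} (hD : IsPGroup p D)
    (S T : Sylow p (normalizer (D : Set G))) :
    ∃ c : normalizer (D : Set G), (c : G) ∈ centralizer (D : Set G) ∧ c • S = T := by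
  obtain ⟨g, rfl⟩ := MulAction.exists_smul_eq (normalizer (D : Set G)) S T
  obtain ⟨c, hc, s, hs, rfl⟩ := mem_sup_of_normal_left.1
    ((hG.centralizer_sup_sylow_eq_top hD S).ge (mem_top g))
  refine ⟨c, hc, ?_⟩
  rw [mul_smul, Sylow.smul_eq_iff_mem_normalizer.2 (le_normalizer hs)]

-- Alperin's argument: `P` and `Q` are linked, through Sylow subgroups that meet each other in more
-- than `P ⊓ Q`, to Sylow subgroups whose traces on `N_G(P ⊓ Q)` are Sylow, hence conjugate, there.
theorem exists_mem_centralizer_inf_smul_eq (P Q : Sylow p G) :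
    ∃ c ∈ centralizer (((P : Subgroup G) ⊓ Q : Subgroup G) : Set G), c • P = Q := by
  induction h : Nat.card G - Nat.card ((P : Subgroup G) ⊓ Q : Subgroup G)
    using Nat.strong_induction_on generalizing P Q with
  | _ k ih =>
  obtain rfl | hPQ := eq_or_ne P Q
  · exact ⟨1, one_mem _, one_smul _ _⟩
  set D := (P : Subgroup G) ⊓ Q
  have hDp : IsPGroup p D := P.isPGroup'.to_le inf_le_left
  have hDP : D < P := lt_of_le_of_ne inf_le_left fun he =>
    hPQ (Sylow.ext (P.3 Q.isPGroup' (inf_eq_left.1 he)).symm)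
  have hDQ : D < Q := lt_of_le_of_ne inf_le_right fun he =>
    hPQ (Sylow.ext (Q.3 P.isPGroup' (inf_eq_right.1 he)))
  have hlarger (X Y : Sylow p G) (hXY : D < (X : Subgroup G) ⊓ Y) :
      ∃ c ∈ centralizer (D : Set G), c • X = Y := by
    have hlt : Nat.card D < Nat.card ((X : Subgroup G) ⊓ Y : Subgroup G) :=
      Set.Finite.card_lt_card (Set.toFinite _) hXY
    have hle := card_le_card_group ((X : Subgroup G) ⊓ Y)
    obtain ⟨c, hc, hcXY⟩ := ih _ (by lia) X Y rfl
    exact ⟨c, centralizer_le hXY.le hc, hcXY⟩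
  have hNP := lt_inf_normalizer_of_isPGroup P.isPGroup' hDP
  have hNQ := lt_inf_normalizer_of_isPGroup Q.isPGroup' hDQ
  obtain ⟨R, S, hPR, hRS⟩ := exists_sylow_inf_le_and_comap_eq P (normalizer (D : Set G))
  obtain ⟨U, T, hQU, hUT⟩ := exists_sylow_inf_le_and_comap_eq Q (normalizer (D : Set G))
  obtain ⟨c, hc, rfl⟩ := hG.exists_mem_centralizer_smul_eq hDp S T
  have hQR : (Q : Subgroup G) ⊓ normalizer (D : Set G) ≤ ((c : G) • R : Sylow p G) := by
    intro x hx
    have hxS : (⟨x, hx.2⟩ : normalizer (D : Set G)) ∈ c • S := hUT.le (hQU hx)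
    exact mem_sylow_smul_iff.2 (hRS.ge (mem_sylow_smul_iff.1 hxS))
  obtain ⟨c₁, hc₁, h₁⟩ := hlarger P R (hNP.trans_le (le_inf inf_le_left hPR))
  obtain ⟨c₂, hc₂, h₂⟩ := hlarger ((c : G) • R) Q (hNQ.trans_le (le_inf hQR inf_le_left))
  exact ⟨c₂ * c * c₁, mul_mem (mul_mem hc₂ hc) hc₁, by rw [mul_smul, mul_smul, h₁, h₂]⟩

theorem exists_mem_sylow_conj_eq (P : Sylow p G) {x g : G} (hx : x ∈ P)
    (hg : g * x * g⁻¹ ∈ P) : ∃ h ∈ P, g * x * g⁻¹ = h * x * h⁻¹ := by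
  obtain ⟨c, hc, hcP⟩ := hG.exists_mem_centralizer_inf_smul_eq P (g⁻¹ • P)
  have hcx : x * c = c * x :=
    mem_centralizer_iff.1 hc x ⟨hx, mem_sylow_smul_iff.2 (by simpa using hg)⟩
  have hgc : g * c ∈ normalizer ((P : Subgroup G) : Set G) :=
    Sylow.smul_eq_iff_mem_normalizer.1 (by rw [mul_smul, hcP, smul_inv_smul])
  obtain ⟨z, hz, h, hh, hzh⟩ := mem_sup_of_normal_left.1
    ((hG.centralizer_sup_sylow_eq_top P.isPGroup' (P.subtype le_normalizer)).ge
      (mem_top ⟨g * c, hgc⟩))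
  have hzh : (z : G) * h = g * c := congrArg Subtype.val hzh
  have hz : (h : G) * x * (h : G)⁻¹ * z = z * (h * x * (h : G)⁻¹) :=
    mem_centralizer_iff.1 hz _ (mul_mem (mul_mem hh hx) (inv_mem hh))
  refine ⟨h, hh, ?_⟩
  calc g * x * g⁻¹ = g * (x * c) * (g * c)⁻¹ := by group
    _ = g * c * x * (g * c)⁻¹ := by rw [hcx]; group
    _ = z * (h * x * (h : G)⁻¹) * (z : G)⁻¹ := by rw [← hzh]; group
    _ = h * x * (h : G)⁻¹ := by rw [← hz, mul_inv_cancel_right]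

theorem focalSubgroupOf_le_commutator (P : Sylow p G) :
    (P : Subgroup G).focalSubgroupOf ≤ _root_.commutator P := by
  rw [focalSubgroupOf_eq_closure, closure_le]
  rintro y ⟨x, hx, g, hy⟩
  have hconj : g * x⁻¹ * g⁻¹ = x⁻¹ * y := by rw [hy, commutatorElement_def]; group
  obtain ⟨h, hh, hgh⟩ := hG.exists_mem_sylow_conj_eq P (inv_mem hx)
    (hconj ▸ mul_mem (inv_mem hx) y.2)
  have hyh : y = ⁅(⟨x, hx⟩ : P), (⟨h, hh⟩ : P)⁆ := by
    ext
    have hxy : (y : G) = x * (h * x⁻¹ * h⁻¹) := by rw [← hgh, hconj, mul_inv_cancel_left]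
    simpa [commutatorElement_def, mul_assoc] using hxy
  exact hyh ▸ commutator_mem_commutator (mem_top _) (mem_top _)

theorem exists_normal_index_eq_pow (hp : p ∣ Nat.card G) :
    ∃ K : Subgroup G, K.Normal ∧ K ≠ ⊤ ∧ ∃ n, K.index = p ^ n := by
  obtain ⟨P⟩ : Nonempty (Sylow p G) := inferInstance
  have := (nontrivial_iff_ne_bot _).2 (P.ne_bot_of_dvd_card hp)
  have := P.isPGroup'.isNilpotent
  have hlt : (P : Subgroup G).focalSubgroupOf < ⊤ :=
    (hG.focalSubgroupOf_le_commutator P).trans_lt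
      (Group.IsSolvable.commutator_lt_top_of_nontrivial P)
  have e := transferFocal.quotientKerMulEquivQuotientFocalSubroupOf P
  have hindex := (index_eq_card _).trans (Nat.card_congr e.toEquiv)
  refine ⟨(P : Subgroup G).transferFocal.ker, inferInstance, fun htop => hlt.ne ?_, ?_⟩
  · rwa [htop, index_top, ← index_eq_card, eq_comm, index_eq_one] at hindex
  · exact hindex ▸ IsPGroup.iff_card.1 (P.isPGroup'.to_quotient _)

end HasPGroupAutomizers

theorem IsSupersoluble.le_centralizer_of_isPGroup [Finite G] (hG : IsSupersoluble G) {p q : ℕ}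
    (hp : p.Prime) (hq : q.Prime) (hpq : p < q) {D X : Subgroup G} [D.Normal] (hD : IsPGroup p D)
    (hX : IsPGroup q X) : X ≤ centralizer (D : Set G) := by
  obtain ⟨N, hN⟩ := hG.exists_isUpperHall (p + 1)
  have := hN.normal
  have hDN : Disjoint D N := disjoint_of_coprime_natCard
    (coprime_natCard_of_isPGroup hp hD fun h => (hN.le_of_dvd_card p hp h).not_gt p.lt_succ_self)
  intro x hx
  refine mem_centralizer_iff.2 fun d hd => ?_
  exact commute_of_normal_of_disjoint D N inferInstance inferInstance hDN d x hd
    (hN.le_of_isPGroup hq hpq hX hx)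

theorem primeFactors_card_subset_pair [Finite G] {p q : ℕ} (hp : p.Prime) (hq : q.Prime)
    {D X : Subgroup G} (hD : IsPGroup p D) (hX : IsPGroup q X)
    (hXD : X ≤ normalizer (D : Set G)) (h : D ⊔ X = ⊤) : (Nat.card G).primeFactors ⊆ {p, q} := by
  have hDn : D.Normal := normalizer_eq_top_iff.1 (top_le_iff.1 (h ▸ sup_le le_normalizer hXD))
  have hindex : D.index ∣ Nat.card X := by
    rw [← D.relIndex_top_right, ← h, sup_comm, relIndex_sup_right]
    exact D.relIndex_dvd_card X
  intro r hr
  obtain ⟨hr, hd, -⟩ := Nat.mem_primeFactors.1 hr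
  rw [← D.card_mul_index, hr.dvd_mul] at hd
  rw [Finset.mem_insert, Finset.mem_singleton]
  exact hd.imp (eq_of_dvd_natCard_of_isPGroup hp hD hr)
    fun h => eq_of_dvd_natCard_of_isPGroup hq hX hr (h.trans hindex)

theorem hasPGroupAutomizers_minFac [Finite G] (hG : ∀ H : Subgroup G, H ≠ ⊤ → IsSupersoluble H)
    (hcard : 2 < (Nat.card G).primeFactors.card) :
    HasPGroupAutomizers (Nat.card G).minFac G := by
  have hp : (Nat.card G).minFac.Prime :=
    Nat.minFac_prime fun h => by simp [h] at hcard
  intro D hD q hq hqp X hX hXD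
  obtain rfl | hXbot := eq_or_ne X ⊥
  · exact bot_le
  have hpq : (Nat.card G).minFac < q := by
    refine lt_of_le_of_ne (Nat.minFac_le_of_dvd hq.two_le ?_) hqp.symm
    have := Fact.mk hq
    obtain ⟨n, hn, hXn⟩ := hX.nontrivial_iff_card.1 ((nontrivial_iff_ne_bot X).2 hXbot)
    exact (hXn ▸ dvd_pow_self q hn.ne').trans X.card_subgroup_dvd_card
  have htop : D ⊔ X ≠ ⊤ := fun h => hcard.not_ge
    ((Finset.card_le_card (primeFactors_card_subset_pair hp hq hD hX hXD h)).trans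
      Finset.card_le_two)
  have hDn : (D.subgroupOf (D ⊔ X)).Normal :=
    normal_subgroupOf_of_le_normalizer (sup_le le_normalizer hXD)
  have hcent := (hG _ htop).le_centralizer_of_isPGroup hp hq hpq
    (D := D.subgroupOf (D ⊔ X)) (X := X.subgroupOf (D ⊔ X)) hD.comap_subtype hX.comap_subtype
  intro x hx
  refine mem_centralizer_iff.2 fun d hd => ?_
  exact congrArg Subtype.val (mem_centralizer_iff.1
    (hcent (x := ⟨x, mem_sup_right hx⟩) hx) ⟨d, mem_sup_left hd⟩ hd)

theorem exists_isUpperHall_of_forall_isSupersoluble [Finite G]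
    (hG : ∀ H : Subgroup G, H ≠ ⊤ → IsSupersoluble H)
    (hcard : 2 < (Nat.card G).primeFactors.card) (n : ℕ) : ∃ N : Subgroup G, IsUpperHall n N := by
  have hp := Fact.mk (Nat.minFac_prime (n := Nat.card G) fun h => by simp [h] at hcard)
  obtain hn | hn := le_or_gt n (Nat.card G).minFac
  · exact ⟨⊤, isUpperHall_top fun q hq h => hn.trans (Nat.minFac_le_of_dvd hq.two_le h)⟩
  · obtain ⟨K, hKn, hK, k, hk⟩ := (hasPGroupAutomizers_minFac hG hcard).exists_normal_index_eq_pow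
      (Nat.minFac_dvd _)
    obtain ⟨L, hL⟩ := (hG K hK).exists_isUpperHall n
    refine ⟨_, hL.map_subtype fun q hq h => ?_⟩
    rw [hk] at h
    exact ((Nat.prime_dvd_prime_iff_eq hq hp.out).1 (hq.dvd_of_dvd_pow h)).symm ▸ hn

end PAutomizers

section Maschke

theorem exists_isCompl_of_smul_mem {A H : Type*} [CommGroup A] [Group H] [Finite H] {p : ℕ}
    [Fact p.Prime] [Module (ZMod p) (Additive A)] (hH : ¬ p ∣ Nat.card H) (φ : H →* MulAut A)
    {L : Subgroup A} (hL : ∀ h, ∀ a ∈ L, φ h a ∈ L) :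
    ∃ M : Subgroup A, (∀ h, ∀ a ∈ M, φ h a ∈ M) ∧ IsCompl L M := by
  have : NeZero (Nat.card H : ZMod p) := ⟨mt (ZMod.natCast_eq_zero_iff _ _).1 hH⟩
  let ρ : Representation (ZMod p) H (Additive A) :=
    { toFun := fun h => (MonoidHom.toAdditive (φ h).toMonoidHom).toZModLinearMap p
      map_one' := by ext a; simp
      map_mul' := fun g h => by ext a; simp }
  let e : Subgroup A ≃o Submodule (ZMod p) (Additive A) :=
    toAddSubgroup.trans (AddSubgroup.toZModSubmodule p)
  obtain ⟨W, hW⟩ := exists_isCompl (⟨e L, hL⟩ : Subrepresentation ρ)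
  refine ⟨e.symm W.toSubmodule, fun h a ha => W.apply_mem_toSubmodule h ha, ?_⟩
  rw [e.isCompl_iff, e.apply_symm_apply, isCompl_iff, disjoint_iff, codisjoint_iff]
  exact ⟨congrArg Subrepresentation.toSubmodule hW.inf_eq_bot,
    congrArg Subrepresentation.toSubmodule hW.sup_eq_top⟩

variable {G : Type*} [Group G] [Finite G] {p : ℕ} [Fact p.Prime]

open scoped IsMulCommutative in
theorem exists_normal_sup_eq_of_pow_eq_one {V L : Subgroup G} [V.Normal] [IsMulCommutative V]
    (hexp : ∀ x ∈ V, x ^ p = 1) (hindex : ¬ p ∣ V.index) [hLn : L.Normal] (hL : L ≤ V) :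
    ∃ M : Subgroup G, M.Normal ∧ L ⊔ M = V ∧ L ⊓ M = ⊥ := by
  have hV : V ≤ (MulAut.conjNormal : G →* MulAut V).ker := by
    refine fun x hx => MulEquiv.ext fun y => Subtype.ext ?_
    rw [MulAut.conjNormal_apply, mul_inv_eq_iff_eq_mul]
    exact setLike_mul_comm hx y.2
  have : Module (ZMod p) (Additive V) := AddCommGroup.zmodModule fun a =>
    congrArg Additive.ofMul (Subtype.ext (hexp _ a.toMul.2) : a.toMul ^ p = 1)
  obtain ⟨M, hM, hLM⟩ := exists_isCompl_of_smul_mem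
    (V.index_eq_card ▸ hindex) (QuotientGroup.lift V MulAut.conjNormal hV) (L := L.subgroupOf V)
    (fun h => QuotientGroup.induction_on h fun g a ha => hLn.conj_mem a ha g)
  have hLV : (L.subgroupOf V).map V.subtype = L := by
    rw [subgroupOf_map_subtype, inf_eq_left.2 hL]
  refine ⟨M.map V.subtype, ⟨?_⟩, ?_, ?_⟩
  · rintro _ ⟨a, ha, rfl⟩ g
    exact ⟨_, hM (g : G ⧸ V) a ha, rfl⟩
  · rw [← hLV, ← Subgroup.map_sup, hLM.sup_eq_top, ← MonoidHom.range_eq_map, range_subtype]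
  · rw [← hLV, ← Subgroup.map_inf _ _ _ V.subtype_injective, hLM.inf_eq_bot, Subgroup.map_bot]

theorem exists_normal_sup_eq_of_pow_mem {F V L : Subgroup G} [F.Normal] [hVn : V.Normal]
    [hLn : L.Normal] [IsMulCommutative (V.map (QuotientGroup.mk' F))] (hF : F ≤ V)
    (hexp : ∀ x ∈ V, x ^ p ∈ F) (hindex : ¬ p ∣ V.index) (hL : L ≤ V) :
    ∃ M : Subgroup G, M.Normal ∧ L ⊔ M = V ∧ L ⊓ M ≤ F := by
  have hsurj := QuotientGroup.mk'_surjective F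
  have hker : (QuotientGroup.mk' F).ker ≤ V := (QuotientGroup.ker_mk' F).symm ▸ hF
  have := hVn.map _ hsurj
  have hexp' : ∀ x ∈ V.map (QuotientGroup.mk' F), x ^ p = 1 := by
    rintro _ ⟨x, hx, rfl⟩
    exact (QuotientGroup.eq_one_iff _).2 (hexp x hx)
  obtain ⟨M, hMn, hsup, hinf⟩ := exists_normal_sup_eq_of_pow_eq_one hexp'
    (by rwa [index_map_eq _ hsurj hker]) (hLn := hLn.map _ hsurj) (map_mono hL)
  refine ⟨M.comap (QuotientGroup.mk' F), hMn.comap _, ?_, fun x hx => ?_⟩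
  · refine map_injective_of_ker_le _ ((MonoidHom.ker_le_comap _ M).trans le_sup_right) hker ?_
    rw [Subgroup.map_sup, map_comap_eq_self_of_surjective hsurj, hsup]
  · exact (QuotientGroup.eq_one_iff _).1 (hinf.le ⟨mem_map_of_mem _ hx.1, hx.2⟩)

end Maschke

section Frattini

open scoped commutatorElement

theorem isSimpleGroup_quotient_of_isCoatom {G : Type*} [Group G] {M : Subgroup G} [M.Normal]
    (hM : IsCoatom M) : IsSimpleGroup (G ⧸ M) := by
  have := QuotientGroup.nontrivial_iff.2 hM.1
  refine ⟨fun H _ => ?_⟩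
  rw [← map_comap_eq_self_of_surjective (QuotientGroup.mk'_surjective M) H]
  obtain h | h := (QuotientGroup.le_comap_mk' M H).eq_or_lt
  · exact Or.inl (by rw [← h, QuotientGroup.map_mk'_self])
  · exact Or.inr (by rw [hM.2 _ h, map_top_of_surjective _ (QuotientGroup.mk'_surjective M)])

theorem mem_frattini_iff {G : Type*} [Group G] {x : G} :
    x ∈ frattini G ↔ ∀ M : Subgroup G, IsCoatom M → x ∈ M := by
  simp [frattini, Order.radical, mem_iInf]

theorem commutator_le_frattini {G : Type*} [Group G] [Group.IsNilpotent G] :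
    commutator G ≤ frattini G := by
  refine fun x hx => mem_frattini_iff.2 fun M hM => ?_
  have := Group.normalizerCondition_of_isNilpotent.normal_of_coatom _ hM
  have := isSimpleGroup_quotient_of_isCoatom hM
  exact Normal.quotient_commutative_iff_commutator_le.1 inferInstance hx

theorem pow_mem_frattini_of_isPGroup {G : Type*} [Group G] [Finite G] {p : ℕ} [Fact p.Prime]
    (hG : IsPGroup p G) (x : G) : x ^ p ∈ frattini G := by
  refine mem_frattini_iff.2 fun M hM => ?_
  have := hG.isNilpotent
  have := Group.normalizerCondition_of_isNilpotent.normal_of_coatom _ hM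
  have := isSimpleGroup_quotient_of_isCoatom hM
  have hcard : Nat.card (G ⧸ M) = p :=
    (eq_of_dvd_natCard_of_isPGroup Fact.out (hG.to_quotient M)
      (CommGroup.is_simple_iff_prime_card.1 inferInstance) dvd_rfl)
  rw [← QuotientGroup.eq_one_iff, QuotientGroup.mk_pow, ← hcard, pow_card_eq_one']

variable {G : Type*} [Group G]

theorem frattiniIn_le (P : Subgroup G) : frattiniIn P ≤ P := map_subtype_le _

instance normal_frattiniIn (P : Subgroup G) [P.Normal] : (frattiniIn P).Normal :=
  ConjAct.normal_of_characteristic_of_normal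

theorem eq_of_le_sup_frattiniIn [Finite G] {P H : Subgroup G} (hH : H ≤ P)
    (h : P ≤ H ⊔ frattiniIn P) : H = P := by
  refine le_antisymm hH (subgroupOf_eq_top.1 (frattini_nongenerating ?_))
  apply map_injective P.subtype_injective
  rw [Subgroup.map_sup, map_subgroupOf_eq_of_le hH, ← MonoidHom.range_eq_map, range_subtype]
  exact le_antisymm (sup_le hH (frattiniIn_le P)) h

theorem commutator_le_frattiniIn (P : Subgroup G) [Group.IsNilpotent P] : ⁅P, P⁆ ≤ frattiniIn P :=
  commutator_le.2 fun x hx y hy => ⟨⁅(⟨x, hx⟩ : P), (⟨y, hy⟩ : P)⁆,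
    commutator_le_frattini (commutator_mem_commutator (mem_top _) (mem_top _)), rfl⟩

theorem isMulCommutative_map_mk'_of_commutator_le {P N : Subgroup G} [N.Normal] (h : ⁅P, P⁆ ≤ N) :
    IsMulCommutative (P.map (QuotientGroup.mk' N)) := by
  rwa [← commutator_self_eq_bot_iff, ← map_commutator, Subgroup.map_eq_bot_iff,
    QuotientGroup.ker_mk']

instance isMulCommutative_map_mk'_frattiniIn (P : Subgroup G) [P.Normal] [Group.IsNilpotent P] :
    IsMulCommutative (P.map (QuotientGroup.mk' (frattiniIn P))) :=
  isMulCommutative_map_mk'_of_commutator_le (commutator_le_frattiniIn P)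

theorem exists_normal_lt_sup_eq_of_not_le_frattiniIn [Finite G] {p : ℕ} [Fact p.Prime]
    {P L : Subgroup G} [P.Normal] [L.Normal] (hP : IsPGroup p P) (hindex : ¬ p ∣ P.index)
    (hLP : L ≤ P) (hL : ¬ L ≤ frattiniIn P) :
    ∃ M : Subgroup G, M.Normal ∧ M < P ∧ L ⊔ M = P := by
  have := hP.isNilpotent
  obtain ⟨M, hMn, hsup, hinf⟩ := exists_normal_sup_eq_of_pow_mem (frattiniIn_le P)
    (fun x hx => ⟨_, pow_mem_frattini_of_isPGroup hP ⟨x, hx⟩, rfl⟩) hindex hLP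
  refine ⟨M, hMn, lt_of_le_of_ne (hsup ▸ le_sup_right) fun he => hL ?_, hsup⟩
  rwa [he, inf_eq_left.2 hLP] at hinf

end Frattini

section Chief

variable {G : Type*} [Group G]

theorem isChiefFactor_of_forall {A B : Subgroup G} [hA : A.Normal] [hB : B.Normal] (hBA : B < A)
    (h : ∀ X : Subgroup G, X.Normal → B ≤ X → X < A → X ≤ B) : IsChiefFactor A B := by
  have hsurj := QuotientGroup.mk'_surjective B
  refine ⟨hA, hBA.le, hB, hA.map _ hsurj, fun he => ?_, fun M hM hMA hMne => ?_⟩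
  · rw [Subgroup.map_eq_bot_iff, QuotientGroup.ker_mk'] at he
    exact hBA.not_ge he
  · have hker : (QuotientGroup.mk' B).ker ≤ A := (QuotientGroup.ker_mk' B).symm ▸ hBA.le
    rw [← map_comap_eq_self_of_surjective hsurj M] at hMne ⊢
    have hle : M.comap (QuotientGroup.mk' B) ≤ A :=
      (comap_mono hMA).trans (comap_map_eq_self hker).le
    obtain heq | hlt := hle.eq_or_lt
    · rw [heq]
    · refine absurd ?_ hMne
      rw [Subgroup.map_eq_bot_iff, QuotientGroup.ker_mk']
      exact h _ (hM.comap _) (QuotientGroup.le_comap_mk' B M) hlt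

theorem frattiniIn_lt [Finite G] {P : Subgroup G} (hP : P ≠ ⊥) : frattiniIn P < P :=
  lt_of_le_of_ne (frattiniIn_le P) fun he =>
    hP (eq_of_le_sup_frattiniIn bot_le (by rw [bot_sup_eq, he])).symm

theorem inf_centralizer_ne_bot_of_isPGroup [Finite G] {p : ℕ} [Fact p.Prime] {P L : Subgroup G}
    [hLn : L.Normal] (hP : IsPGroup p P) (hLP : L ≤ P) (hL : L ≠ ⊥) :
    L ⊓ centralizer (P : Set G) ≠ ⊥ := by
  let _ : MulAction P L := MulAction.compHom L ((MulAut.conjNormal : G →* MulAut L).comp P.subtype)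
  obtain ⟨k, hk, hcard⟩ := (hP.to_le hLP).nontrivial_iff_card.1 ((nontrivial_iff_ne_bot L).2 hL)
  obtain ⟨b, hb, hb1⟩ := hP.exists_fixed_point_of_prime_dvd_card_of_fixed_point L
    (hcard ▸ dvd_pow_self p hk.ne') (a := 1) (fun x => map_one (MulAut.conjNormal (x : G)))
  refine fun he => hb1 (Subtype.ext (mem_bot.1 (he.le ⟨b.2, ?_⟩)).symm)
  refine mem_centralizer_iff.2 fun x hx => ?_
  have hxb : x * b * x⁻¹ = b := congrArg Subtype.val (hb ⟨x, hx⟩)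
  exact mul_inv_eq_iff_eq_mul.1 hxb

theorem IsSupersoluble.exists_le_normalizer_zpowers {L T : Subgroup G} [hLn : L.Normal]
    (hT : IsSupersoluble T) (hLT : L ≤ T) (hL : L ≠ ⊥) :
    ∃ c ∈ L, c ≠ 1 ∧ T ≤ normalizer (zpowers c : Set G) := by
  have hne : L.subgroupOf T ≠ ⊥ := by
    rwa [Ne, subgroupOf_eq_bot, disjoint_iff, inf_eq_left.2 hLT]
  obtain ⟨c, hc, hc1, hcn⟩ := (hT.isHypercyclicallyEmbedded _).exists_zpowers_normal hne
  refine ⟨c, hc, by simpa using hc1, ?_⟩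
  rw [← normal_subgroupOf_iff_le_normalizer (zpowers_le.2 c.2)]
  have hmap : zpowers (c : G) = (zpowers c).map T.subtype :=
    (MonoidHom.map_zpowers T.subtype c).symm
  rwa [hmap, subgroupOf, comap_map_eq_self_of_injective T.subtype_injective]

theorem exists_zpowers_normal_of_isPGroup [Finite G] {p : ℕ} [Fact p.Prime] {P L T : Subgroup G}
    [P.Normal] [L.Normal] (hP : IsPGroup p P) (hLP : L ≤ P) (hL : L ≠ ⊥) (hT : IsSupersoluble T)
    (hLT : L ≤ T) (hPT : P ⊔ T = ⊤) : ∃ c ∈ L, c ≠ 1 ∧ (zpowers c).Normal := by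
  have : (L ⊓ centralizer (P : Set G)).Normal := normal_inf_normal _ _
  obtain ⟨c, hc, hc1, hcT⟩ := hT.exists_le_normalizer_zpowers (inf_le_left.trans hLT)
    (inf_centralizer_ne_bot_of_isPGroup hP hLP hL)
  refine ⟨c, hc.1, hc1, normalizer_eq_top_iff.1 (top_le_iff.1 (hPT ▸ sup_le ?_ hcT))⟩
  exact (le_centralizer_iff.1 (zpowers_le.2 hc.2)).trans (centralizer_le_normalizer _)

theorem IsHypercyclicallyEmbedded.of_isPGroup [Finite G] {p : ℕ} [Fact p.Prime]
    {P L T : Subgroup G} [hPn : P.Normal] [hLn : L.Normal] (hP : IsPGroup p P) (hLP : L ≤ P)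
    (hT : IsSupersoluble T) (hLT : L ≤ T) (hPT : P ⊔ T = ⊤) : IsHypercyclicallyEmbedded L := by
  induction h : Nat.card G using Nat.strong_induction_on generalizing G with
  | _ k ih =>
    obtain rfl | hL := eq_or_ne L ⊥
    · exact .bot
    obtain ⟨c, hc, hc1, hcn⟩ := exists_zpowers_normal_of_isPGroup hP hLP hL hT hLT hPT
    have hsurj := QuotientGroup.mk'_surjective (zpowers c)
    have hlt : Nat.card (G ⧸ zpowers c) < k := by
      rw [← h, ← (zpowers c).index_eq_card, ← (zpowers c).card_mul_index]
      refine lt_mul_of_one_lt_left (Nat.pos_of_ne_zero (index_ne_zero_of_finite)) ?_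
      rwa [one_lt_card_iff_ne_bot, Ne, zpowers_eq_bot]
    have hLc := ih _ hlt (P := P.map (QuotientGroup.mk' (zpowers c)))
      (L := L.map (QuotientGroup.mk' (zpowers c))) (T := T.map (QuotientGroup.mk' (zpowers c)))
      (hPn := hPn.map _ hsurj) (hLn := hLn.map _ hsurj) (hP.map _)
      (map_mono hLP) (hT.of_surjective ((QuotientGroup.mk' (zpowers c)).subgroupMap_surjective T))
      (map_mono hLT) (by rw [← Subgroup.map_sup, hPT, map_top_of_surjective _ hsurj]) rfl
    have hker : (QuotientGroup.mk' (zpowers c)).ker ≤ L :=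
      (QuotientGroup.ker_mk' (zpowers c)).symm ▸ zpowers_le.2 hc
    have hL := (of_zpowers hcn).comap_mk hLc
    rwa [comap_map_eq_self hker] at hL

theorem sup_inf_assoc_of_normal_of_le {N : Subgroup G} [N.Normal] (H : Subgroup G)
    {K : Subgroup G} (h : N ≤ K) : (N ⊔ H) ⊓ K = N ⊔ H ⊓ K :=
  SetLike.coe_injective <| by
    rw [coe_inf, normal_mul, normal_mul, mul_inf_assoc N H K h]

theorem eq_of_le_of_sup_eq_top_of_inf_eq_bot {P X H : Subgroup G} [X.Normal] (hX : X ≤ P)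
    (hXH : X ⊔ H = ⊤) (hPH : P ⊓ H = ⊥) : X = P := by
  have hmod := sup_inf_assoc_of_normal_of_le H hX
  rw [hXH, top_inf_eq, inf_comm, hPH, sup_bot_eq] at hmod
  exact hmod.symm

theorem IsMinimalNonsupersoluble.isSupersoluble_quotient
    (hG : IsMinimalNonsupersoluble G) {N : Subgroup G} [N.Normal]
    (hcop : (Nat.card N).Coprime N.index) (hN : N ≠ ⊥) : IsSupersoluble (G ⧸ N) := by
  obtain ⟨H, hH⟩ := exists_right_complement'_of_coprime hcop
  have hHtop : H ≠ ⊤ := by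
    rintro rfl
    exact hN (isComplement'_top_right.1 hH)
  exact (hG.2 H hHtop).quotient_of_sup_eq_top hH.sup_eq_top

theorem IsMinimalNonsupersoluble.not_isHypercyclicallyEmbedded
    (hG : IsMinimalNonsupersoluble G) {N : Subgroup G} [N.Normal]
    (hcop : (Nat.card N).Coprime N.index) (hN : N ≠ ⊥) : ¬ IsHypercyclicallyEmbedded N :=
  fun h => hG.1 (h.isSupersoluble_of_quotient (hG.isSupersoluble_quotient hcop hN))

theorem IsMinimalNonsupersoluble.le_frattiniIn_of_normal [Finite G]
    (hG : IsMinimalNonsupersoluble G) {p : ℕ} [Fact p.Prime] {P : Subgroup G} [P.Normal]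
    (hP : IsPGroup p P) (hindex : ¬ p ∣ P.index) {L : Subgroup G} [L.Normal] (hL : L < P) :
    L ≤ frattiniIn P := by
  by_contra hLP
  have hcop := coprime_natCard_of_isPGroup Fact.out hP hindex
  obtain ⟨M, hMn, hM, hsup⟩ := exists_normal_lt_sup_eq_of_not_le_frattiniIn hP hindex hL.le hLP
  obtain ⟨H, hH⟩ := exists_right_complement'_of_coprime hcop
  have hemb (X : Subgroup G) [X.Normal] (hX : X < P) : IsHypercyclicallyEmbedded X := by
    have hXH : X ⊔ H ≠ ⊤ := fun htop =>
      hX.ne (eq_of_le_of_sup_eq_top_of_inf_eq_bot hX.le htop hH.disjoint.eq_bot)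
    refine .of_isPGroup hP hX.le (hG.2 _ hXH) le_sup_left ?_
    rw [← sup_assoc, sup_eq_left.2 hX.le, hH.sup_eq_top]
  exact hG.not_isHypercyclicallyEmbedded hcop (bot_le.trans_lt hL).ne'
    (hsup ▸ (hemb L hL).sup (hemb M hM))

theorem IsMinimalNonsupersoluble.isChiefFactor_frattiniIn [Finite G]
    (hG : IsMinimalNonsupersoluble G) {p : ℕ} [Fact p.Prime] {P : Subgroup G} [P.Normal]
    (hP : IsPGroup p P) (hindex : ¬ p ∣ P.index) (hne : P ≠ ⊥) :
    IsChiefFactor P (frattiniIn P) :=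
  isChiefFactor_of_forall (frattiniIn_lt hne) fun _ _ _ hX =>
    hG.le_frattiniIn_of_normal hP hindex hX

end Chief

section Commutator

open scoped commutatorElement

variable {G : Type*} [Group G]

theorem commutator_le_centralizer_of_isCyclic (A : Subgroup G) [A.Normal] [IsCyclic A] :
    commutator G ≤ centralizer (A : Set G) := by
  refine (Abelianization.commutator_subset_ker
    ((IsCyclic.mulAutMulEquiv A).toMonoidHom.comp MulAut.conjNormal)).trans fun g hg => ?_
  have hg1 : MulAut.conjNormal g = (1 : MulAut A) := (IsCyclic.mulAutMulEquiv A).map_eq_one_iff.1 hg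
  refine mem_centralizer_iff.2 fun a ha => (mul_inv_eq_iff_eq_mul.1 ?_).symm
  exact congrArg Subtype.val (DFunLike.congr_fun hg1 ⟨a, ha⟩)

theorem commutator_le_iff_le_comap_centralizer {N A B : Subgroup G} [N.Normal] :
    ⁅A, B⁆ ≤ N ↔ A ≤ (centralizer (B.map (QuotientGroup.mk' N) : Set (G ⧸ N))).comap
      (QuotientGroup.mk' N) := by
  rw [← map_le_iff_le_comap, ← commutator_eq_bot_iff_le_centralizer, ← map_commutator,
    Subgroup.map_eq_bot_iff, QuotientGroup.ker_mk']

theorem commutator_commutator_sup_zpowers_le {X : Subgroup G} [X.Normal] {b : G}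
    (hb : (X ⊔ zpowers b).Normal) : ⁅commutator G, X ⊔ zpowers b⁆ ≤ X := by
  have hsurj := QuotientGroup.mk'_surjective X
  have hmap : (X ⊔ zpowers b).map (QuotientGroup.mk' X) = zpowers (QuotientGroup.mk' X b) := by
    rw [Subgroup.map_sup, QuotientGroup.map_mk'_self, bot_sup_eq, MonoidHom.map_zpowers]
  have hn := hb.map _ hsurj
  rw [hmap] at hn
  rw [commutator_le_iff_le_comap_centralizer, hmap, ← map_le_iff_le_comap, commutator_def,
    map_commutator]
  exact (commutator_mono le_top le_top).trans (commutator_le_centralizer_of_isCyclic _)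

theorem commutatorElement_pow_left {g v : G} (h : Commute g ⁅g, v⁆) (n : ℕ) :
    ⁅g ^ n, v⁆ = ⁅g, v⁆ ^ n := by
  induction n with
  | zero => simp
  | succ n ih =>
    calc ⁅g ^ (n + 1), v⁆ = g * ⁅g ^ n, v⁆ * g⁻¹ * ⁅g, v⁆ := by
          rw [pow_succ', commutatorElement_def, commutatorElement_def, commutatorElement_def]
          group
      _ = ⁅g, v⁆ ^ (n + 1) := by
          rw [ih, (h.pow_right n).eq, mul_inv_cancel_right, pow_succ]

/- An element `g` of `D` satisfies `⁅g, a⁆ ^ n = ⁅g ^ n, a⁆`, which is trivial for `n = V.index`. -/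
theorem le_centralizer_of_commutator_le {V : Subgroup G} [V.Normal]
    [IsMulCommutative V] (hV : (Nat.card V).Coprime V.index) {D X A : Subgroup G} (hA : A ≤ V)
    (hX : D ≤ centralizer (X : Set G)) (hDA : ⁅D, A⁆ ≤ X) : D ≤ centralizer (A : Set G) := by
  rw [← commutator_eq_bot_iff_le_centralizer, eq_bot_iff, commutator_le]
  intro g hg a ha
  have hga : Commute g ⁅g, a⁆ :=
    (mem_centralizer_iff.1 (hX hg) _ (hDA (commutator_mem_commutator hg ha))).symm
  have hgaV : ⁅g, a⁆ ∈ V :=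
    (commutator_le_right ⊤ V) (commutator_mem_commutator (mem_top g) (hA ha))
  have hpow : ⁅g, a⁆ ^ V.index = 1 := by
    rw [← commutatorElement_pow_left hga, commutatorElement_eq_one_iff_mul_comm]
    exact setLike_mul_comm (V.pow_index_mem g) (hA ha)
  exact mem_bot.2 (orderOf_eq_one_iff.1 (Nat.eq_one_of_dvd_coprimes hV
    (V.orderOf_dvd_natCard hgaV) (orderOf_dvd_of_pow_eq_one hpow)))

theorem IsHypercyclicallyEmbedded.commutator_le_centralizer {V : Subgroup G} [V.Normal]
    [IsMulCommutative V] (hV : (Nat.card V).Coprime V.index) {A : Subgroup G}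
    (hA : IsHypercyclicallyEmbedded A) (hAV : A ≤ V) :
    commutator G ≤ centralizer (A : Set G) := by
  induction hA with
  | bot => exact le_centralizer_iff.1 bot_le
  | sup_zpowers b hX h ih =>
    have := hX.normal
    exact le_centralizer_of_commutator_le hV hAV (ih (le_sup_left.trans hAV))
      (commutator_commutator_sup_zpowers_le h)

theorem IsSupersoluble.commutator_le_centralizer {V K : Subgroup G} [V.Normal]
    [IsMulCommutative V] (hV : (Nat.card V).Coprime V.index) (hK : IsSupersoluble K)
    (hVK : V ≤ K) : ⁅K, K⁆ ≤ centralizer (V : Set G) := by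
  have hVK' : (Nat.card (V.subgroupOf K)).Coprime (V.subgroupOf K).index := by
    rw [Nat.card_congr (subgroupOfEquivOfLe hVK).toEquiv]
    exact hV.coprime_dvd_right (relIndex_dvd_index_of_normal V K)
  rw [← map_subtype_commutator, le_centralizer_iff, ← map_subgroupOf_eq_of_le hVK,
    ← commutator_eq_bot_iff_le_centralizer, ← map_commutator,
    Subgroup.map_eq_bot_iff_of_injective _ K.subtype_injective,
    commutator_eq_bot_iff_le_centralizer, le_centralizer_iff]
  exact (hK.isHypercyclicallyEmbedded (V.subgroupOf K)).commutator_le_centralizer hVK' le_rfl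

end Commutator

section Eigen

variable {G : Type*} [Group G]

open scoped commutatorElement

/-- The elements of the abelian subgroup `V` which every `x ∈ Q` conjugates to their `n x`-th power:
a common eigenspace of `Q` on `V`. -/
def eigenSubgroup (V Q : Subgroup G) [IsMulCommutative V] (n : Q → ℤ) : Subgroup G where
  carrier := {w | w ∈ V ∧ ∀ x : Q, x * w * (x : G)⁻¹ = w ^ n x}
  one_mem' := ⟨V.one_mem, by simp⟩
  mul_mem' {a b} ha hb := ⟨V.mul_mem ha.1 hb.1, fun x => by
    have hab : Commute a b := setLike_mul_comm ha.1 hb.1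
    rw [hab.mul_zpow, ← ha.2, ← hb.2, conj_mul]⟩
  inv_mem' {a} ha := ⟨V.inv_mem ha.1, fun x => by rw [inv_zpow, ← ha.2, conj_inv]⟩

variable {V Q R : Subgroup G} [IsMulCommutative V]

theorem eigenSubgroup_le (n : Q → ℤ) : eigenSubgroup V Q n ≤ V := fun _ hw => hw.1

theorem le_normalizer_of_le_eigenSubgroup {n : Q → ℤ} {W : Subgroup G}
    (hW : W ≤ eigenSubgroup V Q n) : Q ≤ normalizer (W : Set G) :=
  le_normalizer_iff.2 fun x hx w hw => by
    rw [(hW hw).2 ⟨x, hx⟩]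
    exact zpow_mem hw _

theorem normal_eigenSubgroup [hV : V.Normal] (n : Q → ℤ) (hgen : V ⊔ Q ⊔ R = ⊤)
    (hQR : ⁅Q, R⁆ ≤ centralizer (V : Set G)) : (eigenSubgroup V Q n).Normal := by
  rw [← normalizer_eq_top_iff, eq_top_iff, ← hgen]
  refine sup_le (sup_le ?_ (le_normalizer_of_le_eigenSubgroup le_rfl)) ?_ <;>
    refine le_normalizer_iff.2 fun y hy w hw => ?_
  · rwa [setLike_mul_comm hy hw.1, mul_inv_cancel_right]
  · have hyw := hV.conj_mem w hw.1 y
    refine ⟨hyw, fun x => ?_⟩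
    have hcomm := mem_centralizer_iff.1 (hQR (commutator_mem_commutator x.2 hy)) _
      (V.zpow_mem hyw (n x))
    calc x * (y * w * y⁻¹) * (x : G)⁻¹
        = ⁅(x : G), y⁆ * (y * (x * w * (x : G)⁻¹) * y⁻¹) * ⁅(x : G), y⁆⁻¹ := by
          rw [commutatorElement_def]; group
      _ = (y * w * y⁻¹) ^ n x := by
          rw [hw.2 x, ← conj_zpow, ← hcomm, mul_inv_cancel_right]

/- All of `V` is a single eigenspace of `Q`, so a line of `V` normalized by `R` is normal. -/
theorem IsMinimalNormal.isCyclic_of_commutator_le (hV : IsMinimalNormal V)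
    (hgen : V ⊔ Q ⊔ R = ⊤) (hVQ : IsSupersoluble (V ⊔ Q : Subgroup G))
    (hVR : IsSupersoluble (V ⊔ R : Subgroup G)) (hQR : ⁅Q, R⁆ ≤ centralizer (V : Set G)) :
    IsCyclic V := by
  obtain ⟨hVn, hne, hmin⟩ := hV
  obtain ⟨c, hcV, hc1, hc⟩ := hVQ.exists_le_normalizer_zpowers le_sup_left hne
  choose n hn using fun x : Q => (le_normalizer_iff.1 hc) x (mem_sup_right x.2) c (mem_zpowers c)
  have hcE : c ∈ eigenSubgroup V Q n := ⟨hcV, fun x => (hn x).symm⟩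
  have hE : eigenSubgroup V Q n = V := hmin _ (normal_eigenSubgroup n hgen hQR)
    (eigenSubgroup_le n) (ne_bot_iff_exists_ne_one.2 ⟨⟨c, hcE⟩, by simpa using hc1⟩)
  obtain ⟨d, hdV, hd1, hd⟩ := hVR.exists_le_normalizer_zpowers le_sup_left hne
  have hQd : Q ≤ normalizer (zpowers d : Set G) :=
    le_normalizer_of_le_eigenSubgroup (hE ▸ zpowers_le.2 hdV)
  have hdn : (zpowers d).Normal := by
    rw [← normalizer_eq_top_iff, eq_top_iff, ← hgen, sup_right_comm]
    exact sup_le hd hQd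
  have hdeq := hmin _ hdn (zpowers_le.2 hdV) (mt zpowers_eq_bot.1 hd1)
  exact hdeq ▸ inferInstance

end Eigen

section Cyclic

variable {G : Type*} [Group G]

theorem isCyclic_of_isCyclic_map_mk' {N A : Subgroup G} [N.Normal] (hA : A ⊓ N = ⊥)
    (h : IsCyclic (A.map (QuotientGroup.mk' N))) : IsCyclic A := by
  obtain ⟨c, hc⟩ := exists_sup_zpowers_of_isCyclic_map (QuotientGroup.mk' N) A
  rw [QuotientGroup.ker_mk', hA, bot_sup_eq] at hc
  exact hc ▸ inferInstance

theorem isCyclic_of_isCyclic_map_mk'_frattiniIn [Finite G] {P : Subgroup G} [P.Normal]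
    (h : IsCyclic (P.map (QuotientGroup.mk' (frattiniIn P)))) : IsCyclic P := by
  obtain ⟨c, hc⟩ := exists_sup_zpowers_of_isCyclic_map (QuotientGroup.mk' (frattiniIn P)) P
  rw [QuotientGroup.ker_mk', inf_eq_right.2 (frattiniIn_le P)] at hc
  have hcP : zpowers c ≤ P := hc ▸ le_sup_right
  exact eq_of_le_sup_frattiniIn hcP (hc.le.trans_eq (sup_comm _ _)) ▸ inferInstance

/-- The centralizer in `G` of the section `P ⧸ Φ(P)`. -/
def frattiniCentralizer (P : Subgroup G) [P.Normal] : Subgroup G :=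
  (centralizer (P.map (QuotientGroup.mk' (frattiniIn P)) : Set (G ⧸ frattiniIn P))).comap
    (QuotientGroup.mk' (frattiniIn P))

instance normal_frattiniCentralizer (P : Subgroup G) [hP : P.Normal] :
    (frattiniCentralizer P).Normal :=
  have := hP.map _ (QuotientGroup.mk'_surjective (frattiniIn P))
  Normal.comap inferInstance _

theorem IsSupersoluble.commutator_le_frattiniCentralizer [Finite G] {p : ℕ} [Fact p.Prime]
    {P K : Subgroup G} [hPn : P.Normal] (hP : IsPGroup p P) (hindex : ¬ p ∣ P.index)
    (hK : IsSupersoluble K) (hPK : P ≤ K) : ⁅K, K⁆ ≤ frattiniCentralizer P := by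
  have hsurj := QuotientGroup.mk'_surjective (frattiniIn P)
  have := hPn.map _ hsurj
  have := hP.isNilpotent
  have hindex' : ¬ p ∣ (P.map (QuotientGroup.mk' (frattiniIn P))).index := by
    rwa [index_map_eq _ hsurj ((QuotientGroup.ker_mk' _).trans_le (frattiniIn_le P))]
  rw [frattiniCentralizer, ← map_le_iff_le_comap, map_commutator]
  exact IsSupersoluble.commutator_le_centralizer
    (coprime_natCard_of_isPGroup Fact.out (hP.map _) hindex')
    (hK.of_surjective ((QuotientGroup.mk' (frattiniIn P)).subgroupMap_surjective K)) (map_mono hPK)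

theorem IsMinimalNonsupersoluble.not_commutator_le_frattiniCentralizer [Finite G]
    (hG : IsMinimalNonsupersoluble G) {p : ℕ} [Fact p.Prime] {P Q R : Subgroup G} [hPn : P.Normal]
    (hP : IsPGroup p P) (hindex : ¬ p ∣ P.index) (hne : P ≠ ⊥) (hgen : P ⊔ Q ⊔ R = ⊤)
    (hPQ : P ⊔ Q ≠ ⊤) (hPR : P ⊔ R ≠ ⊤) : ¬ ⁅Q, R⁆ ≤ frattiniCentralizer P := fun hQR => by
  have hsurj := QuotientGroup.mk'_surjective (frattiniIn P)
  have := hP.isNilpotent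
  obtain ⟨-, -, _, hmin⟩ := hG.isChiefFactor_frattiniIn hP hindex hne
  have hss (T : Subgroup G) (hT : T ≠ ⊤) :
      IsSupersoluble (T.map (QuotientGroup.mk' (frattiniIn P))) :=
    (hG.2 T hT).of_surjective ((QuotientGroup.mk' (frattiniIn P)).subgroupMap_surjective T)
  rw [frattiniCentralizer, ← map_le_iff_le_comap, map_commutator] at hQR
  have hcyc := IsMinimalNormal.isCyclic_of_commutator_le hmin
    (by rw [← Subgroup.map_sup, ← Subgroup.map_sup, hgen, map_top_of_surjective _ hsurj])
    (by rw [← Subgroup.map_sup]; exact hss _ hPQ) (by rw [← Subgroup.map_sup]; exact hss _ hPR) hQR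
  obtain ⟨c, rfl⟩ := (Subgroup.isCyclic_iff_exists_zpowers_eq_top _).1
    (isCyclic_of_isCyclic_map_mk'_frattiniIn hcyc)
  exact hG.not_isHypercyclicallyEmbedded (coprime_natCard_of_isPGroup Fact.out hP hindex) hne
    (.of_zpowers hPn)

variable {C K P Q R : Subgroup G}

theorem isCyclic_of_not_commutator_le [K.Normal] (hKR : R ⊓ K = ⊥) (hQK : Q ≤ K)
    (hC : ∀ M : Subgroup G, K ≤ M → M ≠ ⊤ → ⁅M, M⁆ ≤ C) (hQR : ¬ ⁅Q, R⁆ ≤ C) : IsCyclic R := by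
  rw [commutator_le] at hQR
  push Not at hQR
  obtain ⟨x, hx, y, -, hxy⟩ := hQR
  have htop : K ⊔ zpowers y = ⊤ := by
    by_contra hne
    exact hxy (hC _ le_sup_left hne (commutator_mem_commutator (mem_sup_left (hQK hx))
      (mem_sup_right (mem_zpowers y))))
  have hmap : zpowers (QuotientGroup.mk' K y) = ⊤ := by
    rw [← MonoidHom.map_zpowers, ← bot_sup_eq (map _ _), ← QuotientGroup.map_mk'_self K,
      ← Subgroup.map_sup, htop, map_top_of_surjective _ (QuotientGroup.mk'_surjective K)]
  exact isCyclic_of_isCyclic_map_mk' hKR (isCyclic_of_le (hmap ▸ le_top))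

theorem commutator_le_of_lt {X : Subgroup G} [X.Normal] (hKR : K ⊓ R = ⊥) (hX : X < K)
    (hC : X ⊔ R ≠ ⊤ → ⁅X ⊔ R, X ⊔ R⁆ ≤ C) : ⁅X, R⁆ ≤ C :=
  (commutator_mono le_sup_left le_sup_right).trans
    (hC fun htop => hX.ne (eq_of_le_of_sup_eq_top_of_inf_eq_bot hX.le htop hKR))

theorem sup_ne_of_not_commutator_le [C.Normal] {X Y : Subgroup G} [X.Normal] [Y.Normal]
    (hKR : K ⊓ R = ⊥) (hPX : P ≤ X) (hXK : X < K) (hPY : P ≤ Y) (hYK : Y < K)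
    (hC : ∀ M : Subgroup G, P ≤ M → M ≠ ⊤ → ⁅M, M⁆ ≤ C) (hQR : ¬ ⁅K, R⁆ ≤ C) : X ⊔ Y ≠ K := by
  rintro rfl
  have hX := commutator_le_of_lt hKR hXK (hC _ (hPX.trans le_sup_left))
  have hY := commutator_le_of_lt hKR hYK (hC _ (hPY.trans le_sup_left))
  rw [commutator_le_iff_le_comap_centralizer] at hX hY hQR
  exact hQR (sup_le hX hY)

theorem isCyclic_of_forall_normal_lt_le_frattiniIn [Finite G] (hG : IsSupersoluble G) [Q.Normal]
    (h : ∀ L : Subgroup G, L.Normal → L < Q → L ≤ frattiniIn Q) : IsCyclic Q := by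
  obtain rfl | hQ := eq_or_ne Q ⊥
  · infer_instance
  obtain ⟨L, hL, hLn, c, hc⟩ := (hG.isHypercyclicallyEmbedded Q).exists_lt_sup_zpowers hQ
  have hcQ : zpowers c ≤ Q := hc ▸ le_sup_right
  have hQc : Q ≤ zpowers c ⊔ frattiniIn Q := by
    conv_lhs => rw [hc]
    exact sup_le ((h L hLn hL).trans le_sup_right) le_sup_left
  exact eq_of_le_sup_frattiniIn hcQ hQc ▸ inferInstance

theorem isCyclic_map_mk'_of_not_commutator_le [Finite G] {q : ℕ} [Fact q.Prime] [P.Normal]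
    [C.Normal] [hK : K.Normal] (hPK : P ≤ K) (hG : IsSupersoluble (G ⧸ P))
    (hKP : IsPGroup q (K.map (QuotientGroup.mk' P))) (hindex : ¬ q ∣ K.index) (hKR : K ⊓ R = ⊥)
    (hC : ∀ M : Subgroup G, P ≤ M → M ≠ ⊤ → ⁅M, M⁆ ≤ C) (hQR : ¬ ⁅K, R⁆ ≤ C) :
    IsCyclic (K.map (QuotientGroup.mk' P)) := by
  have hsurj := QuotientGroup.mk'_surjective P
  have hker : (QuotientGroup.mk' P).ker ≤ K := (QuotientGroup.ker_mk' P).trans_le hPK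
  have hKn := hK.map _ hsurj
  refine isCyclic_of_forall_normal_lt_le_frattiniIn hG fun L hL hLK => ?_
  by_contra hLF
  rw [← index_map_eq _ hsurj hker] at hindex
  obtain ⟨M, hM, hMK, hsup⟩ := exists_normal_lt_sup_eq_of_not_le_frattiniIn hKP hindex hLK.le hLF
  have hlt {X : Subgroup (G ⧸ P)} (hX : X < K.map (QuotientGroup.mk' P)) :
      X.comap (QuotientGroup.mk' P) < K := by
    rwa [← comap_map_eq_self hker, comap_lt_comap_of_surjective hsurj]
  have hLn := hL.comap (QuotientGroup.mk' P)
  have hMn := hM.comap (QuotientGroup.mk' P)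
  refine sup_ne_of_not_commutator_le hKR (QuotientGroup.le_comap_mk' P L) (hlt hLK)
    (QuotientGroup.le_comap_mk' P M) (hlt hMK) hC hQR ?_
  rw [comap_sup_eq _ _ _ hsurj, hsup, comap_map_eq_self hker]

theorem IsMinimalNonsupersoluble.isCyclic_and_isCyclic [Finite G]
    (hG : IsMinimalNonsupersoluble G) {p q : ℕ} [Fact p.Prime] [Fact q.Prime] [P.Normal]
    [(P ⊔ Q).Normal] (hP : IsPGroup p P) (hindexP : ¬ p ∣ P.index) (hQ : IsPGroup q Q)
    (hindexQ : ¬ q ∣ (P ⊔ Q).index) (hgen : P ⊔ Q ⊔ R = ⊤) (hPQ : P ⊓ Q = ⊥)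
    (hPQR : (P ⊔ Q) ⊓ R = ⊥) (hPne : P ≠ ⊥) (hQne : Q ≠ ⊥) (hRne : R ≠ ⊥) :
    IsCyclic Q ∧ IsCyclic R := by
  have hPQtop : P ⊔ Q ≠ ⊤ := fun h => hRne (by rwa [h, top_inf_eq] at hPQR)
  have hPRtop : P ⊔ R ≠ ⊤ := fun h => by
    have hQP : Q ≤ P :=
      sup_eq_left.1 (eq_of_le_of_sup_eq_top_of_inf_eq_bot le_sup_left h hPQR).symm
    exact hQne (inf_eq_right.2 hQP ▸ hPQ)
  have hQR := hG.not_commutator_le_frattiniCentralizer hP hindexP hPne hgen hPQtop hPRtop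
  have hC (M : Subgroup G) (hPM : P ≤ M) (hM : M ≠ ⊤) : ⁅M, M⁆ ≤ frattiniCentralizer P :=
    (hG.2 M hM).commutator_le_frattiniCentralizer hP hindexP hPM
  refine ⟨isCyclic_of_isCyclic_map_mk' (inf_comm P Q ▸ hPQ) ?_, isCyclic_of_not_commutator_le
    (inf_comm R (P ⊔ Q) ▸ hPQR) le_sup_right (fun M hM => hC M (le_sup_left.trans hM)) hQR⟩
  have hmap : (P ⊔ Q).map (QuotientGroup.mk' P) = Q.map (QuotientGroup.mk' P) := by
    rw [Subgroup.map_sup, QuotientGroup.map_mk'_self, bot_sup_eq]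
  refine hmap ▸ isCyclic_map_mk'_of_not_commutator_le le_sup_left
    (hG.isSupersoluble_quotient (coprime_natCard_of_isPGroup Fact.out hP hindexP) hPne)
    (hmap ▸ hQ.map _) hindexQ hPQR hC fun h => hQR ((commutator_mono le_sup_right le_rfl).trans h)

end Cyclic

section CyclicChief

variable {G : Type*} [Group G] {N Q : Subgroup G}

theorem normal_map_mk'_of_normal_sup [N.Normal] [hNQ : (N ⊔ Q).Normal] :
    (Q.map (QuotientGroup.mk' N)).Normal := by
  rw [← bot_sup_eq (Q.map _), ← QuotientGroup.map_mk'_self N, ← Subgroup.map_sup]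
  exact hNQ.map _ (QuotientGroup.mk'_surjective N)

theorem normal_sup_frattiniIn_of_isCyclic [N.Normal] [IsCyclic Q] [(N ⊔ Q).Normal] :
    (N ⊔ frattiniIn Q).Normal := by
  have := normal_map_mk'_of_normal_sup (N := N) (Q := Q)
  have : IsCyclic (Q.map (QuotientGroup.mk' N)) :=
    isCyclic_of_surjective _ ((QuotientGroup.mk' N).subgroupMap_surjective Q)
  rw [← QuotientGroup.comap_map_mk']
  exact (normal_of_le_of_isCyclic (map_mono (frattiniIn_le Q))).comap _

variable [Finite G] {p : ℕ} [Fact p.Prime]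

theorem eq_or_le_frattiniIn_of_isCyclic [IsCyclic Q] (hQ : IsPGroup p Q) {X : Subgroup G}
    (hX : X ≤ Q) : X = Q ∨ X ≤ frattiniIn Q := by
  obtain ⟨c, rfl⟩ := (Subgroup.isCyclic_iff_exists_zpowers_eq_top Q).1 inferInstance
  obtain ⟨n, hn⟩ := IsPGroup.iff_card.1 hQ
  rw [Nat.card_zpowers] at hn
  refine or_iff_not_imp_right.2 fun hle => hX.antisymm ?_
  obtain ⟨x, hx, hxF⟩ := SetLike.not_le_iff_exists.1 hle
  obtain ⟨k, rfl⟩ := mem_zpowers_iff.1 (hX hx)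
  have hpk : ¬ (p : ℤ) ∣ k := by
    rintro ⟨j, rfl⟩
    refine hxF ⟨_, pow_mem_frattini_of_isPGroup hQ ⟨c ^ j, zpow_mem_zpowers c j⟩, ?_⟩
    rw [mul_comm, zpow_mul, zpow_natCast]
    rfl
  have hgcd : k.gcd (orderOf c) = 1 := by
    rw [hn, ← Int.isCoprime_iff_gcd_eq_one, Nat.cast_pow]
    exact ((Nat.prime_iff_prime_int.1 Fact.out).coprime_iff_not_dvd.2 hpk).symm.pow_right
  exact zpowers_le.2 (zpowers_le.2 hx (mem_zpowers_zpow_iff.2 hgcd))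

theorem isChiefFactor_sup_frattiniIn_of_isCyclic [hN : N.Normal] [IsCyclic Q] [(N ⊔ Q).Normal]
    (hQ : IsPGroup p Q) (hne : Q ≠ ⊥) (hNQ : N ⊓ Q = ⊥) :
    IsChiefFactor (N ⊔ Q) (N ⊔ frattiniIn Q) := by
  have := normal_sup_frattiniIn_of_isCyclic (N := N) (Q := Q)
  refine isChiefFactor_of_forall ?_ fun X _ hBX hXA => ?_
  · refine lt_of_le_not_ge (sup_le_sup_left (frattiniIn_le Q) N) fun hle => ?_
    refine (frattiniIn_lt hne).not_ge fun x hx => ?_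
    obtain ⟨a, ha, b, hb, rfl⟩ := mem_sup_of_normal_left.1 (hle (mem_sup_right hx))
    have ha1 : a ∈ N ⊓ Q := ⟨ha, (mul_mem_cancel_right (frattiniIn_le Q hb)).1 hx⟩
    rw [hNQ, mem_bot] at ha1
    rwa [ha1, one_mul]
  · have hX : X = N ⊔ Q ⊓ X := by
      rw [← sup_inf_assoc_of_normal_of_le Q (le_sup_left.trans hBX), inf_eq_right.2 hXA.le]
    obtain h | h := eq_or_le_frattiniIn_of_isCyclic hQ (inf_le_left : Q ⊓ X ≤ Q)
    · exact absurd (h ▸ hX) hXA.ne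
    · exact hX.le.trans (sup_le_sup_left h N)

end CyclicChief

section CoatomClass

variable {G : Type*} [Group G]

namespace ConjSubgroup

theorem le_of_normal_le {A B N : Subgroup G} [hN : N.Normal] (h : ConjSubgroup A B) (hNB : N ≤ B) :
    N ≤ A := by
  obtain ⟨g, rfl⟩ := h
  intro x hx
  obtain ⟨y, hy, hxy⟩ := hNB (hN.conj_mem x hx g)
  rwa [← (MulAut.conj g).injective hxy]

theorem comap {H : Type*} [Group H] {f : G →* H} (hf : Function.Surjective f) {A B : Subgroup H}
    (h : ConjSubgroup A B) : ConjSubgroup (A.comap f) (B.comap f) := by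
  obtain ⟨h, rfl⟩ := h
  obtain ⟨g, rfl⟩ := hf h
  refine ⟨g, ?_⟩
  ext x
  simp [map_equiv_eq_comap_symm]

end ConjSubgroup

section Complement

open MulAction MulOpposite
open scoped Pointwise

variable [Finite G] {V A B : Subgroup G} [V.Normal] [IsMulCommutative V]

theorem exists_eq_stabilizer_of_isComplement' (hV : (Nat.card V).Coprime V.index)
    (hA : IsComplement' V A) : ∃ α : V.QuotientDiff, A = stabilizer G α := by
  let T : V.LeftTransversal := ⟨A, hA.symm⟩
  let α : V.QuotientDiff := Quotient.mk'' T
  have hcard := hA.card_mul_card.trans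
    (isComplement'_stabilizer_of_coprime (α := α) hV).card_mul_card.symm
  refine ⟨α, eq_of_le_of_card_ge (fun a ha => ?_) (Nat.eq_of_mul_eq_mul_left Nat.card_pos hcard).ge⟩
  have hT : op a⁻¹ • T = T := Subtype.ext (op_smul_coe_set (A.inv_mem ha))
  exact mem_stabilizer_iff.2 (congrArg Quotient.mk'' hT)

theorem conjSubgroup_of_isComplement' (hV : (Nat.card V).Coprime V.index) (hA : IsComplement' V A)
    (hB : IsComplement' V B) : ConjSubgroup A B := by
  obtain ⟨α, rfl⟩ := exists_eq_stabilizer_of_isComplement' hV hA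
  obtain ⟨β, rfl⟩ := exists_eq_stabilizer_of_isComplement' hV hB
  obtain ⟨h, rfl⟩ := exists_smul_eq hV α β
  exact ⟨h, stabilizer_smul_eq_stabilizer_map_conj (h : G) α⟩

end Complement

theorem isCoatom_of_isCoatom_comap {H : Type*} [Group H] {f : G →* H} (hf : Function.Surjective f)
    {M : Subgroup H} (hM : IsCoatom (M.comap f)) : IsCoatom M :=
  ⟨fun h => hM.1 (by rw [h, comap_top]), fun K hK => comap_injective hf
    (by rw [hM.2 _ ((comap_lt_comap_of_surjective hf).2 hK), comap_top])⟩

/-- The maximal subgroups of `G` that contain `N` but not `A` form a single conjugacy class. -/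
def HasUniqueCoatomClass (N A : Subgroup G) : Prop :=
  ∃ M, IsCoatom M ∧ N ≤ M ∧ ¬ A ≤ M ∧
    ∀ M', IsCoatom M' → N ≤ M' → ¬ A ≤ M' → ConjSubgroup M M'

theorem HasUniqueCoatomClass.comap {H : Type*} [Group H] {f : G →* H} (hf : Function.Surjective f)
    {N A : Subgroup H} (h : HasUniqueCoatomClass N A) :
    HasUniqueCoatomClass (N.comap f) (A.comap f) := by
  obtain ⟨M, hM, hNM, hAM, hconj⟩ := h
  refine ⟨M.comap f, isCoatom_comap_of_surjective hf hM, comap_mono hNM,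
    fun hle => hAM ((comap_le_comap_of_surjective hf).1 hle), fun M' hM' hNM' hAM' => ?_⟩
  have hker : M' = (M'.map f).comap f :=
    (comap_map_eq_self ((MonoidHom.ker_le_comap f N).trans hNM')).symm
  rw [hker] at hM' hNM' hAM' ⊢
  refine (hconj _ ?_ ((comap_le_comap_of_surjective hf).1 hNM')
    fun hle => hAM' (comap_mono hle)).comap hf
  exact isCoatom_of_isCoatom_comap hf hM'

theorem IsMinimalNormal.isComplement'_of_isCoatom {V M : Subgroup G} [IsMulCommutative V]
    (hV : IsMinimalNormal V) (hM : IsCoatom M) (hVM : ¬ V ≤ M) : IsComplement' V M := by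
  have hVn := hV.1
  have hsup : V ⊔ M = ⊤ := hM.2 _ (right_lt_sup.2 hVM)
  have hnormal : (V ⊓ M).Normal := by
    rw [← normalizer_eq_top_iff, ← top_le_iff, ← hsup]
    refine sup_le (le_normalizer_iff.2 fun v hv x hx => ?_)
      (le_normalizer_iff.2 fun m hm x hx => ?_)
    · rwa [setLike_mul_comm hv hx.1, mul_inv_cancel_right]
    · exact ⟨hVn.conj_mem x hx.1 m, M.mul_mem (M.mul_mem hm hx.2) (M.inv_mem hm)⟩
  refine isComplement'_of_disjoint_and_mul_eq_univ (disjoint_iff.2 ?_) ?_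
  · by_contra hne
    exact hVM (inf_eq_left.1 (hV.2.2 _ hnormal inf_le_left hne))
  · rw [← normal_mul, hsup, coe_top]

theorem IsMinimalNormal.hasUniqueCoatomClass [Finite G] {V : Subgroup G} [IsMulCommutative V]
    (hV : IsMinimalNormal V) (hcop : (Nat.card V).Coprime V.index) : HasUniqueCoatomClass ⊥ V := by
  have hVn := hV.1
  obtain ⟨H, hH⟩ := exists_right_complement'_of_coprime hcop
  have hHtop : H ≠ ⊤ := by
    rintro rfl
    exact hV.2.1 (isComplement'_top_right.1 hH)
  obtain ⟨M, hM, hHM⟩ := (eq_top_or_exists_le_coatom H).resolve_left hHtop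
  have hVM : ¬ V ≤ M := fun hle => hM.1 (top_le_iff.1 (hH.sup_eq_top ▸ sup_le hle hHM))
  exact ⟨M, hM, bot_le, hVM, fun M' hM' _ hVM' => conjSubgroup_of_isComplement' hcop
    (hV.isComplement'_of_isCoatom hM hVM) (hV.isComplement'_of_isCoatom hM' hVM')⟩

theorem frattiniIn_le_of_isCoatom [Finite G] {P M : Subgroup G} [P.Normal] (hM : IsCoatom M) :
    frattiniIn P ≤ M := by
  by_contra hle
  have hmod := sup_inf_assoc_of_normal_of_le M (frattiniIn_le P)
  rw [hM.2 _ (right_lt_sup.2 hle), top_inf_eq] at hmod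
  have hMP := eq_of_le_sup_frattiniIn inf_le_right (hmod.le.trans (sup_comm _ _).le)
  exact hle ((frattiniIn_le P).trans (inf_eq_right.1 hMP))

theorem map_frattiniIn_le {H : Type*} [Group H] (f : G →* H) (P : Subgroup G) :
    (frattiniIn P).map f ≤ frattiniIn (P.map f) := by
  rintro _ ⟨_, ⟨x, hx, rfl⟩, rfl⟩
  exact ⟨f.subgroupMap P x,
    frattini_le_comap_frattini_of_surjective (f.subgroupMap_surjective P) hx, rfl⟩

theorem frattiniIn_le_of_isCoatom_of_normal_sup [Finite G] {N Q M : Subgroup G} [N.Normal]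
    [hNQ : (N ⊔ Q).Normal] (hM : IsCoatom M) (hNM : N ≤ M) : frattiniIn Q ≤ M := by
  have hsurj := QuotientGroup.mk'_surjective N
  have hker : (M.map (QuotientGroup.mk' N)).comap (QuotientGroup.mk' N) = M :=
    comap_map_eq_self ((QuotientGroup.ker_mk' N).trans_le hNM)
  have : (Q.map (QuotientGroup.mk' N)).Normal := normal_map_mk'_of_normal_sup
  rw [← hker] at hM ⊢
  exact map_le_iff_le_comap.1 ((map_frattiniIn_le _ Q).trans
    (frattiniIn_le_of_isCoatom (isCoatom_of_isCoatom_comap hsurj hM)))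

theorem IsChiefFactor.hasUniqueCoatomClass [Finite G] {p : ℕ} [Fact p.Prime] {N Q : Subgroup G}
    [N.Normal] (h : IsChiefFactor (N ⊔ Q) (N ⊔ frattiniIn Q)) (hQ : IsPGroup p Q)
    (hindex : ¬ p ∣ (N ⊔ Q).index) : HasUniqueCoatomClass N (N ⊔ Q) := by
  obtain ⟨hA, hBA, hB, hmin⟩ := h
  set B := N ⊔ frattiniIn Q
  have hsurj := QuotientGroup.mk'_surjective B
  have hker : (QuotientGroup.mk' B).ker ≤ N ⊔ Q := (QuotientGroup.ker_mk' B).trans_le hBA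
  have hmap : (N ⊔ Q).map (QuotientGroup.mk' B) = Q.map (QuotientGroup.mk' B) := by
    rw [Subgroup.map_sup, sup_eq_right, (Subgroup.map_eq_bot_iff _).2]
    · exact bot_le
    · exact le_sup_left.trans_eq (QuotientGroup.ker_mk' B).symm
  have := hQ.isNilpotent
  have hcomm : IsMulCommutative ((N ⊔ Q).map (QuotientGroup.mk' B)) := hmap ▸
    isMulCommutative_map_mk'_of_commutator_le ((commutator_le_frattiniIn Q).trans le_sup_right)
  have hcop : (Nat.card ((N ⊔ Q).map (QuotientGroup.mk' B))).Coprime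
      ((N ⊔ Q).map (QuotientGroup.mk' B)).index := by
    refine coprime_natCard_of_isPGroup Fact.out (hmap ▸ hQ.map _) ?_
    rwa [index_map_eq _ hsurj hker]
  obtain ⟨M, hM, hBM, hAM, hconj⟩ :=
    (IsMinimalNormal.hasUniqueCoatomClass hmin hcop).comap hsurj
  rw [comap_map_eq_self hker] at hAM hconj
  rw [MonoidHom.comap_bot, QuotientGroup.ker_mk'] at hBM hconj
  refine ⟨M, hM, le_sup_left.trans hBM, hAM, fun M' hM' hNM' => hconj M' hM' ?_⟩
  exact sup_le hNM' (frattiniIn_le_of_isCoatom_of_normal_sup hM' hNM')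

theorem IsChiefFactor.hasUniqueCoatomClass_bot [Finite G] {p : ℕ} [Fact p.Prime] {P : Subgroup G}
    (h : IsChiefFactor P (frattiniIn P)) (hP : IsPGroup p P) (hindex : ¬ p ∣ P.index) :
    HasUniqueCoatomClass ⊥ P := by
  rw [← bot_sup_eq P] at hindex ⊢
  exact hasUniqueCoatomClass (by simpa only [bot_sup_eq] using h) hP hindex

theorem exists_three_isCoatom {K L : Subgroup G} [K.Normal] [L.Normal] (hKL : K ≤ L)
    (hK : HasUniqueCoatomClass ⊥ K) (hL : HasUniqueCoatomClass K L)
    (htop : HasUniqueCoatomClass L ⊤) :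
    ∃ M₁ M₂ M₃ : Subgroup G, IsCoatom M₁ ∧ IsCoatom M₂ ∧ IsCoatom M₃ ∧
      ¬ ConjSubgroup M₁ M₂ ∧ ¬ ConjSubgroup M₁ M₃ ∧ ¬ ConjSubgroup M₂ M₃ ∧
      ∀ M : Subgroup G, IsCoatom M →
        ConjSubgroup M₁ M ∨ ConjSubgroup M₂ M ∨ ConjSubgroup M₃ M := by
  obtain ⟨M₁, hM₁, -, hKM₁, hconj₁⟩ := hK
  obtain ⟨M₂, hM₂, hKM₂, hLM₂, hconj₂⟩ := hL
  obtain ⟨M₃, hM₃, hLM₃, -, hconj₃⟩ := htop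
  refine ⟨M₁, M₂, M₃, hM₁, hM₂, hM₃, fun h => hKM₁ (h.le_of_normal_le hKM₂),
    fun h => hKM₁ (h.le_of_normal_le (hKL.trans hLM₃)), fun h => hLM₂ (h.le_of_normal_le hLM₃),
    fun M hM => ?_⟩
  by_cases hKM : K ≤ M
  · by_cases hLM : L ≤ M
    · exact Or.inr (Or.inr (hconj₃ M hM hLM (hM.1 ∘ top_le_iff.1)))
    · exact Or.inr (Or.inl (hconj₂ M hM hKM hLM))
  · exact Or.inl (hconj₁ M hM bot_le hKM)

end CoatomClass

section ThreePrimes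

variable {G : Type*} [Group G] {p : ℕ} {P : Subgroup G}

theorem IsSylowSubgroup.ne_bot (hP : IsSylowSubgroup p P) (hp : p ∈ (Nat.card G).primeFactors) :
    P ≠ ⊥ := by
  rintro rfl
  exact hP.2 (index_bot (G := G) ▸ Nat.dvd_of_mem_primeFactors hp)

namespace IsUpperHall

variable [Finite G] {n : ℕ} {N : Subgroup G}

theorem inf_eq_bot_of_isPGroup (hN : IsUpperHall n N) (hp : p.Prime) (hpn : p < n)
    (hP : IsPGroup p P) : N ⊓ P = ⊥ :=
  inf_comm N P ▸ (disjoint_of_coprime_natCard (coprime_natCard_of_isPGroup hp hP fun h =>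
    (hN.le_of_dvd_card p hp h).not_gt hpn)).eq_bot

theorem eq_of_forall_exists_isSylowSubgroup (hN : IsUpperHall n N) {H : Subgroup G} (hHN : H ≤ N)
    (h : ∀ p ∈ (Nat.card G).primeFactors, n ≤ p → ∃ P ≤ H, IsSylowSubgroup p P) : H = N := by
  refine hN.eq_of_le hHN fun p hp hpH => lt_of_not_ge fun hnp => ?_
  obtain ⟨P, hPH, hP⟩ := h p
    (Nat.mem_primeFactors.2 ⟨hp, hpH.trans H.index_dvd_card, Nat.card_pos.ne'⟩) hnp
  exact hP.2 (hpH.trans (index_dvd_of_le hPH))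

end IsUpperHall

theorem isUpperHall_sup_of_primeFactors_eq [Finite G] (hG : ∀ n, ∃ N : Subgroup G, IsUpperHall n N)
    {p₁ p₂ p₃ : ℕ} (hp₁ : p₁.Prime) (hp₂ : p₂.Prime) (h12 : p₁ > p₂) (h23 : p₂ > p₃)
    (hπ : (Nat.card G).primeFactors = {p₁, p₂, p₃}) {P₁ P₂ P₃ : Subgroup G}
    (hP₁ : IsSylowSubgroup p₁ P₁) (hP₂ : IsSylowSubgroup p₂ P₂) (hP₃ : IsSylowSubgroup p₃ P₃) :
    IsUpperHall p₁ P₁ ∧ IsUpperHall p₂ (P₁ ⊔ P₂) ∧ P₁ ⊔ P₂ ⊔ P₃ = ⊤ := by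
  obtain ⟨N₁, hN₁⟩ := hG p₁
  obtain ⟨N₂, hN₂⟩ := hG p₂
  refine ⟨?_, ?_, ?_⟩
  · rwa [hN₁.eq_of_forall_exists_isSylowSubgroup (hN₁.le_of_isPGroup hp₁ le_rfl hP₁.1)]
    simp only [hπ, Finset.forall_mem_insert, Finset.mem_singleton, forall_eq]
    exact ⟨fun _ => ⟨P₁, le_rfl, hP₁⟩, fun h => absurd h (by lia), fun h => absurd h (by lia)⟩
  · rwa [hN₂.eq_of_forall_exists_isSylowSubgroup (sup_le (hN₂.le_of_isPGroup hp₁ h12.le hP₁.1)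
      (hN₂.le_of_isPGroup hp₂ le_rfl hP₂.1))]
    simp only [hπ, Finset.forall_mem_insert, Finset.mem_singleton, forall_eq]
    exact ⟨fun _ => ⟨P₁, le_sup_left, hP₁⟩, fun _ => ⟨P₂, le_sup_right, hP₂⟩,
      fun h => absurd h (by lia)⟩
  · have hG₀ : IsUpperHall 0 (⊤ : Subgroup G) := isUpperHall_top fun _ _ _ => Nat.zero_le _
    refine hG₀.eq_of_forall_exists_isSylowSubgroup le_top ?_
    simp only [hπ, Finset.forall_mem_insert, Finset.mem_singleton, forall_eq]
    exact ⟨fun _ => ⟨P₁, le_sup_left.trans le_sup_left, hP₁⟩,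
      fun _ => ⟨P₂, le_sup_right.trans le_sup_left, hP₂⟩, fun _ => ⟨P₃, le_sup_right, hP₃⟩⟩

end ThreePrimes

/-- Let `G` be a minimal nonsupersoluble group with exactly three prime divisors
`p₁ > p₂ > p₃` and Sylow subgroups `P₁, P₂, P₃`.  Then `G` is Ore dispersive, `P₂` and
`P₃` are cyclic, `G` has precisely three conjugacy classes of maximal subgroups, and
`P₁/Φ(P₁)`, `P₁P₂/P₁Φ(P₂)`, `P₁P₂P₃/P₁P₂Φ(P₃)` are chief factors of `G`. -/
theorem minimalNonsupersoluble_three_primes_structure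
    (G : Type*) [Group G] [Finite G] (hG : IsMinimalNonsupersoluble G)
    (p₁ p₂ p₃ : ℕ) (hp₁ : p₁.Prime) (hp₂ : p₂.Prime) (hp₃ : p₃.Prime)
    (h12 : p₁ > p₂) (h23 : p₂ > p₃)
    (hπ : (Nat.card G).primeFactors = {p₁, p₂, p₃})
    (P₁ P₂ P₃ : Subgroup G)
    (hP₁ : IsSylowSubgroup p₁ P₁) (hP₂ : IsSylowSubgroup p₂ P₂)
    (hP₃ : IsSylowSubgroup p₃ P₃) :
    (OreDispersive G ∧ IsCyclic ↥P₂ ∧ IsCyclic ↥P₃) ∧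
    (∃ M₁ M₂ M₃ : Subgroup G, IsCoatom M₁ ∧ IsCoatom M₂ ∧ IsCoatom M₃ ∧
      ¬ ConjSubgroup M₁ M₂ ∧ ¬ ConjSubgroup M₁ M₃ ∧ ¬ ConjSubgroup M₂ M₃ ∧
      ∀ M : Subgroup G, IsCoatom M →
        ConjSubgroup M₁ M ∨ ConjSubgroup M₂ M ∨ ConjSubgroup M₃ M) ∧
    (IsChiefFactor P₁ (frattiniIn P₁) ∧
      IsChiefFactor (P₁ ⊔ P₂) (P₁ ⊔ frattiniIn P₂) ∧
      IsChiefFactor (P₁ ⊔ P₂ ⊔ P₃) (P₁ ⊔ P₂ ⊔ frattiniIn P₃)) := by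
  have := Fact.mk hp₁
  have := Fact.mk hp₂
  have := Fact.mk hp₃
  have hHall := exists_isUpperHall_of_forall_isSupersoluble hG.2
    (hπ ▸ (Finset.card_eq_three.2 ⟨_, _, _, h12.ne', (h23.trans h12).ne', h23.ne', rfl⟩).ge)
  obtain ⟨hH₁, hH₂, htop⟩ := isUpperHall_sup_of_primeFactors_eq hHall hp₁ hp₂ h12 h23 hπ hP₁ hP₂ hP₃
  have := hH₁.normal
  have := hH₂.normal
  have : (P₁ ⊔ P₂ ⊔ P₃).Normal := htop ▸ inferInstance
  have hne₁ := hP₁.ne_bot (by simp [hπ])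
  have hne₂ := hP₂.ne_bot (by simp [hπ])
  have hne₃ := hP₃.ne_bot (by simp [hπ])
  have hinf₂ := hH₁.inf_eq_bot_of_isPGroup hp₂ h12 hP₂.1
  have hinf₃ := hH₂.inf_eq_bot_of_isPGroup hp₃ h23 hP₃.1
  have hindex₂ : ¬ p₂ ∣ (P₁ ⊔ P₂).index := fun h => (hH₂.lt_of_dvd_index p₂ hp₂ h).false
  have hindex₃ : ¬ p₃ ∣ (P₁ ⊔ P₂ ⊔ P₃).index := by simpa [htop] using hp₃.ne_one
  obtain ⟨hcyc₂, hcyc₃⟩ := hG.isCyclic_and_isCyclic hP₁.1 hP₁.2 hP₂.1 hindex₂ htop hinf₂ hinf₃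
    hne₁ hne₂ hne₃
  have hchief₁ := hG.isChiefFactor_frattiniIn hP₁.1 hP₁.2 hne₁
  have hchief₂ := isChiefFactor_sup_frattiniIn_of_isCyclic hP₂.1 hne₂ hinf₂
  have hchief₃ := isChiefFactor_sup_frattiniIn_of_isCyclic hP₃.1 hne₃ hinf₃
  exact ⟨⟨oreDispersive_of_forall_isUpperHall hHall, hcyc₂, hcyc₃⟩,
    exists_three_isCoatom le_sup_left (hchief₁.hasUniqueCoatomClass_bot hP₁.1 hP₁.2)
      (hchief₂.hasUniqueCoatomClass hP₂.1 hindex₂)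
      (htop ▸ hchief₃.hasUniqueCoatomClass hP₃.1 hindex₃), hchief₁, hchief₂, hchief₃⟩
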